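/- arXiv:2109.13401 — 2 statements merged into one kernel-verified Lean document; each statement's English description precedes it below -/
import Mathlib

section
/- Fix c, j ∈ [k+1] with k = m−1. Call a pair (A, B) of set partitions of the m marked vertices a permissible monomial if: A has m−1 parts, with j in the unique part of size two (together with some vertex ℓ) and all other vertices singletons; and B has exactly two parts, with j in one part and both c and ℓ in the other part. Then the right-hand side of the spanning forest identity L_{c,c}(j) (obtained by substituting the Laplacian minor L_{c,c} into the j-th column expansion identity and applying the all-minors matrix tree theorem) consists of exactly one copy of every permissible monomial, each with coefficient +1. -/
open Finset

/-- Determinant of the minor of the `ℕ`-indexed matrix `M` obtained by restricting to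
rows `{0,...,n-1} \ I` and columns `{0,...,n-1} \ J` (in increasing order). -/
noncomputable def minorDet {R : Type*} [CommRing R] (M : Matrix ℕ ℕ R) (n : ℕ)
    (I J : Finset ℕ) : R :=
  if h : (Finset.range n \ J).card = (Finset.range n \ I).card then
    Matrix.det (Matrix.of fun i j : Fin (Finset.range n \ I).card =>
      M (((Finset.range n \ I).orderIsoOfFin rfl i : ℕ))
        (((Finset.range n \ J).orderIsoOfFin h j : ℕ)))
  else 0


/-- The weighted Laplacian of the complete graph on vertices `{0,…,n−1}` with symmetric
edge weights `a`: `L_{ii} = Σ_{l≠i} a_{il}` and `L_{ij} = −a_{ij}` for `i ≠ j`. -/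
noncomputable def lap {R : Type*} [CommRing R] (a : ℕ → ℕ → R) (n : ℕ) :
    Matrix ℕ ℕ R :=
  fun i j => if i = j then ∑ l ∈ Finset.range n \ {i}, a i l else -(a i j)

/-- Skipping map: `skip t` enumerates `{0,1,2,…} ∖ {t}` in increasing order, so that
index `i` of the matrix with row (or column) `t` removed corresponds to original index
`skip t i`. -/
def skip (t i : ℕ) : ℕ := if i < t then i else i + 1

/-- The right-hand side `L_{r,c}(j)` of the spanning forest identity obtained by
substituting the Laplacian minor `L_{r,c}` (row `r` and column `c` removed, with
`r, c < m = k + 1` marked vertices among `n` vertices) for `M` in the `j`-th column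
expansion identity (`0 ≤ j < k = m − 1`):
`(−1)^{r+c} · Σ_{i<k} (−1)^{i+j} det(L_{{skip r i, r},{skip c j, c}})
  · det(L_{[m]∖{skip r i},[m]∖{skip c j}})`
(the factor `(−1)^{r+c}` normalises `det L_{r,c}` to the spanning tree polynomial, so
that the left-hand side of the identity is `Φ_{(1,…,1)} Φ_{(1,2,…,m)}`). -/
noncomputable def lapRHS {R : Type*} [CommRing R] (a : ℕ → ℕ → R) (n m r c j : ℕ) : R :=
  (-1 : R) ^ (r + c) *
  ∑ i ∈ Finset.range (m - 1), (-1 : R) ^ (i + j) *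
    (minorDet (lap a n) n {r, skip r i} {c, skip c j} *
      minorDet (lap a n) n (Finset.range m \ {skip r i}) (Finset.range m \ {skip c j}))

/-- A finite edge set `F` is a spanning forest of `G` compatible with the set partition of
(a subset of) the marked vertices `v : Fin m → V` encoded by `p : Fin m → Option ℕ`
(`p i = none` means vertex `i` is unconstrained, `p i = some ℓ` means vertex `i` lies in
the part labelled `ℓ`): the edges of `F` lie in `G`, `F` is acyclic, two constrained
marked vertices lie in the same tree iff they have the same label, and every vertex of
the graph lies in the tree of some constrained marked vertex (so the trees of the forest
are in bijection with the parts of the partition). -/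
def IsCompatibleForest {V : Type*} [Fintype V] [DecidableEq V] (G : SimpleGraph V) {m : ℕ}
    (v : Fin m → V) (p : Fin m → Option ℕ) (F : Finset (Sym2 V)) : Prop :=
  (F : Set (Sym2 V)) ⊆ G.edgeSet ∧
  (SimpleGraph.fromEdgeSet (F : Set (Sym2 V))).IsAcyclic ∧
  (∀ i j : Fin m, p i ≠ none → p j ≠ none →
    ((SimpleGraph.fromEdgeSet (F : Set (Sym2 V))).Reachable (v i) (v j) ↔ p i = p j)) ∧
  (∀ w : V, ∃ i : Fin m, p i ≠ none ∧
    (SimpleGraph.fromEdgeSet (F : Set (Sym2 V))).Reachable w (v i))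

/-- The spanning forest sum `Σ_{F ∼ P} Π_{e ∈ F} x_e` of the graph `G` with edge
weights `x`, marked vertices `v`, and partition `P` encoded by `p`, in the
included-edge-weight convention in which the all-minors matrix tree theorem expresses
determinants of Laplacian minors (the paper's omitted-edge polynomials `Π_{e ∉ F} a_e`
satisfy exactly the same quadratic identities, by the substitution `a_e ↦ 1/a_e`). -/
noncomputable def forestPoly {V : Type*} [Fintype V] [DecidableEq V] {R : Type*}
    [CommRing R] (G : SimpleGraph V) [DecidableRel G.Adj] (x : Sym2 V → R) {m : ℕ}
    (v : Fin m → V) (p : Fin m → Option ℕ) : R :=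
  ∑ F ∈ G.edgeFinset.powerset,
    (letI := Classical.dec (IsCompatibleForest G v p F)
     if IsCompatibleForest G v p F then ∏ e ∈ F, x e else 0)

open scoped Matrix

set_option linter.unusedSectionVars false

namespace EM

section dets
variable {V : Type*} [Fintype V] [DecidableEq V] {R : Type*} [CommRing R]

/-- rows of the functional-graph matrix -/
def fRow (R : Type*) [CommRing R] (f : V → Option V) (w : V) : V → R :=
  match f w with
  | none => Pi.single w 1
  | some v => Pi.single w 1 - Pi.single v 1

/-- the relation that `v` is the successor of `w` -/
def stp (f : V → Option V) (w v : V) : Prop := f w = some v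

def pre (f : V → Option V) (v w : V) : Prop := f w = some v

theorem det_eq_zero_of_ker (M : Matrix V V R) (v : V → R) (i : V) (hi : v i = 1)
    (h : M.mulVec v = 0) : M.det = 0 := by
  have h1 : (M.adjugate * M).mulVec v = 0 := by
    rw [← Matrix.mulVec_mulVec, h, Matrix.mulVec_zero]
  rw [Matrix.adjugate_mul] at h1
  have := congrFun h1 i
  simpa [Matrix.smul_mulVec, hi] using this

theorem det_fRow (f : V → Option V) (hf : WellFounded (pre f)) :
    Matrix.det (Matrix.of (fRow R f)) = 1 := by
  have : IsWellFounded V (pre f) := ⟨hf⟩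
  have key : ∀ w u, IsWellFounded.rank (pre f) w ≤ IsWellFounded.rank (pre f) u →
      fRow R f w u = if w = u then 1 else 0 := by
    intro w u h
    unfold fRow
    cases hw : f w with
    | none => simp [Pi.single_apply, eq_comm]
    | some v =>
      have hv : IsWellFounded.rank (pre f) v < IsWellFounded.rank (pre f) w :=
        IsWellFounded.rank_lt_of_rel hw
      have : u ≠ v := by
        rintro rfl
        exact absurd h (not_le.mpr hv)
      simp [Pi.single_apply, this, eq_comm]
  have hb : (Matrix.of (fRow R f)).BlockTriangular
      (fun w => OrderDual.toDual (IsWellFounded.rank (pre f) w)) := by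
    intro w u h
    have h' : IsWellFounded.rank (pre f) w < IsWellFounded.rank (pre f) u := h
    rw [Matrix.of_apply, key w u h'.le, if_neg]
    rintro rfl
    exact lt_irrefl _ h'
  rw [hb.det]
  apply Finset.prod_eq_one
  intro x _
  rw [← Matrix.det_one (n := {a // OrderDual.toDual (IsWellFounded.rank (pre f) a) = x})]
  congr 1
  ext ⟨w, hw⟩ ⟨u, hu⟩
  rw [Matrix.toSquareBlock_def, Matrix.of_apply, Matrix.of_apply, key w u]
  · simp [Matrix.one_apply]
  · have := hw.trans hu.symm
    exact le_of_eq (OrderDual.toDual.injective this)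

theorem reach_iff {f : V → Option V} {i w v : V} (hi : f i = none) (hw : f w = some v) :
    Relation.ReflTransGen (stp f) w i ↔ Relation.ReflTransGen (stp f) v i := by
  constructor
  · intro h
    rcases Relation.ReflTransGen.cases_head h with h | ⟨y, hy, h⟩
    · subst h; rw [hi] at hw; cases hw
    · have : f w = some y := hy
      rw [hw] at this; cases this; exact h
  · intro h
    exact Relation.ReflTransGen.head hw h

theorem acc_iff {f : V → Option V} {w v : V} (hw : f w = some v) :
    Acc (pre f) w ↔ Acc (pre f) v := by
  constructor
  · intro h; exact h.inv hw
  · intro h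
    refine Acc.intro w ?_
    intro y hy
    have : f w = some y := hy
    rw [hw] at this; cases this; exact h

theorem acc_of_none {f : V → Option V} {w : V} (hw : f w = none) : Acc (pre f) w := by
  refine Acc.intro w ?_
  intro y hy
  have : f w = some y := hy
  rw [hw] at this; cases this

theorem reach_root_iff {f : V → Option V} {i w : V} (hi : f i = none) :
    Relation.ReflTransGen (stp f) i w ↔ w = i := by
  constructor
  · intro h
    rcases Relation.ReflTransGen.cases_head h with h | ⟨y, hy, h⟩
    · exact h.symm
    · have : f i = some y := hy
      rw [hi] at this; cases this
  · rintro rfl; exact Relation.ReflTransGen.refl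

theorem acc_of_reach {f : V → Option V} {i w : V} (hi : f i = none)
    (h : Relation.ReflTransGen (stp f) w i) : Acc (pre f) w := by
  induction h using Relation.ReflTransGen.head_induction_on with
  | refl => exact acc_of_none hi
  | head h _ ih => exact (acc_iff h).2 ih

open Classical in
theorem mulVec_ind (f : V → Option V) (i j : V) (hi : f i = none) (C : V → Prop)
    (h1 : ∀ w v, f w = some v → (C w ↔ C v)) (h2 : ∀ w, w ≠ i → f w = none → ¬ C w)
    (h3 : ¬ C j) :
    ((Matrix.of (fRow R f)).updateRow i (Pi.single j 1)).mulVec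
      (fun w => if C w then 1 else 0) = 0 := by
  ext w
  rw [Matrix.mulVec]
  by_cases hw : w = i
  · subst hw
    simp [h3]
  · rw [Matrix.updateRow_ne hw]
    simp only [Matrix.of_apply, fRow]
    cases hfw : f w with
    | none => simp [h2 w hw hfw]
    | some v =>
      change ((Pi.single w 1 - Pi.single v 1 : V → R) ⬝ᵥ _) = 0
      rw [sub_dotProduct]
      simp [h1 w v hfw]

open Classical in
theorem det_fRow_update (f : V → Option V) (i j : V) (hi : f i = none) :
    ((Matrix.of (fRow R f)).updateRow i (Pi.single j 1)).det =
      if WellFounded (pre f) ∧ Relation.ReflTransGen (stp f) j i then 1 else 0 := by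
  by_cases hj : Relation.ReflTransGen (stp f) j i
  · by_cases hwf : WellFounded (pre f)
    · rw [if_pos ⟨hwf, hj⟩]
      induction hj using Relation.ReflTransGen.head_induction_on with
      | refl =>
        refine Eq.trans ?_ (det_fRow (R := R) f hwf)
        congr 1
        ext w u
        by_cases hw : w = i
        · subst hw; simp [fRow, hi]
        · simp [Matrix.updateRow_ne hw]
      | @head a b hab _ ih =>
        refine Eq.trans ?_ ih
        have hai : a ≠ i := by
          rintro rfl
          have : f a = some b := hab
          rw [hi] at this; cases this
        have hrow : (Pi.single a 1 : V → R) = Pi.single b 1 + (Matrix.of (fRow R f)) a := by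
          have : f a = some b := hab
          ext u
          simp [fRow, this]
        rw [hrow, Matrix.det_updateRow_add, Matrix.det_updateRow_eq_zero hai, add_zero]
    · rw [if_neg (fun h => hwf h.1)]
      have : ∃ w, ¬ Acc (pre f) w := by
        by_contra! h
        exact hwf ⟨h⟩
      obtain ⟨w, hw⟩ := this
      refine det_eq_zero_of_ker _ (fun w => @ite R (¬ Acc (pre f) w) (Classical.propDecidable _) 1 0) w
        (by simp [hw]) ?_
      apply mulVec_ind f i j hi (fun w => ¬ Acc (pre f) w)
      · intro w v h; rw [acc_iff h]
      · intro w _ h; exact not_not.mpr (acc_of_none h)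
      · exact not_not.mpr (acc_of_reach hi hj)
  · rw [if_neg (fun h => hj h.2)]
    refine det_eq_zero_of_ker _
      (fun w => if Relation.ReflTransGen (stp f) w i then 1 else 0) i
      (by rw [if_pos Relation.ReflTransGen.refl]) ?_
    apply mulVec_ind f i j hi (fun w => Relation.ReflTransGen (stp f) w i)
    · intro w v h; exact reach_iff hi h
    · intro w hw h h'; exact hw ((reach_root_iff h).1 h').symm
    · exact hj

/-- the weight of a choice at a vertex -/
def wgt (x : Sym2 V → R) (I : Finset V) (w : V) : Option V → R
  | none => if w ∈ I then 1 else 0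
  | some v => if w ∈ I then 0 else x s(w, v)

open Classical in
theorem det_expand (x : Sym2 V → R) (I : Finset V) (i j : V) (hiI : i ∈ I)
    (X : Matrix V V R) (hI : ∀ r ∈ I, r ≠ i → X r = Pi.single r 1)
    (hi : X i = Pi.single j 1)
    (hX : ∀ w, w ∉ I → X w = ∑ v, x s(w, v) • (Pi.single w 1 - Pi.single v 1)) :
    X.det = ∑ f : V → Option V, (∏ w, wgt x I w (f w)) *
      (if WellFounded (pre f) ∧ Relation.ReflTransGen (stp f) j i then 1 else 0) := by
  let ρ : V → Option V → (V → R) := fun w o =>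
    match o with
    | none => if w = i then Pi.single j 1 else Pi.single w 1
    | some v => Pi.single w 1 - Pi.single v 1
  have hrow : X = fun w => ∑ o, wgt x I w o • ρ w o := by
    funext w
    rw [Fintype.sum_option]
    by_cases hw : w ∈ I
    · by_cases hwi : w = i
      · subst hwi; simp [wgt, hw, ρ, hi]
      · simp [wgt, hw, ρ, hI w hw hwi, hwi]
    · simp [wgt, hw, ρ, hX w hw]
  change Matrix.detRowAlternating X = _
  rw [hrow]
  have := (Matrix.detRowAlternating (n := V) (R := R)).toMultilinearMap.map_sum
    (fun w o => wgt x I w o • ρ w o)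
  simp only [AlternatingMap.coe_multilinearMap] at this
  rw [this]
  refine Finset.sum_congr rfl fun f _ => ?_
  have h2 := (Matrix.detRowAlternating (n := V) (R := R)).toMultilinearMap.map_smul_univ
    (fun w => wgt x I w (f w)) (fun w => ρ w (f w))
  simp only [AlternatingMap.coe_multilinearMap] at h2
  rw [h2, smul_eq_mul]
  by_cases hfi : f i = none
  · rw [← det_fRow_update (R := R) f i j hfi]
    congr 2
    funext w
    by_cases hw : w = i
    · subst hw
      rw [Matrix.updateRow_self]
      simp [ρ, hfi]
    · rw [Matrix.updateRow_ne hw]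
      change ρ w (f w) = fRow R f w
      simp only [fRow, ρ]
      cases f w <;> simp [hw]
  · have : ∏ w, wgt x I w (f w) = 0 := by
      apply Finset.prod_eq_zero (Finset.mem_univ i)
      cases h : f i with
      | none => exact absurd h hfi
      | some v => simp [wgt, hiI]
    rw [this, zero_mul, zero_mul]

end dets

section graphs
variable {V : Type*} [Fintype V] [DecidableEq V] {R : Type*} [CommRing R]

/-- graph of an edge set -/
abbrev gr (F : Finset (Sym2 V)) : SimpleGraph V := SimpleGraph.fromEdgeSet (F : Set (Sym2 V))

/-- forests rooted at `I`: every tree contains exactly one element of `I` -/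
def Rooted (I : Finset V) (F : Finset (Sym2 V)) : Prop :=
  (gr F).IsAcyclic ∧ (∀ r ∈ I, ∀ s ∈ I, (gr F).Reachable r s → r = s) ∧
    ∀ w, ∃ r ∈ I, (gr F).Reachable w r

/-- edge set of a functional graph -/
def edg (f : V → Option V) (I : Finset V) : Finset (Sym2 V) :=
  (univ.filter (fun w => w ∉ I)).image (fun w => s(w, (f w).getD w))

theorem inv_reach {G : SimpleGraph V} (P : V → Prop) (h : ∀ u v, G.Adj u v → (P u ↔ P v))
    {u v : V} (huv : G.Reachable u v) : P u ↔ P v := by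
  rw [SimpleGraph.reachable_iff_reflTransGen] at huv
  induction huv with
  | refl => rfl
  | tail _ h' ih => exact ih.trans (h _ _ h')

/-- `f` has root set `I` -/
def Good (I : Finset V) (f : V → Option V) : Prop :=
  WellFounded (pre f) ∧ ∀ w, f w = none ↔ w ∈ I

theorem Good.not_two {I : Finset V} {f : V → Option V} (hf : Good I f) {u v : V}
    (h1 : f u = some v) (h2 : f v = some u) : False :=
  hf.1.asymmetric (r := pre f) (a := u) (b := v) h2 h1

theorem Good.ne {I : Finset V} {f : V → Option V} (hf : Good I f) {u v : V}
    (h1 : f u = some v) : u ≠ v := by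
  rintro rfl
  exact hf.not_two h1 h1

theorem mem_edg {I : Finset V} {f : V → Option V} (hf : Good I f) {u v : V} :
    s(u, v) ∈ edg f I ↔ f u = some v ∨ f v = some u := by
  unfold edg
  simp only [mem_image, mem_filter, mem_univ, true_and]
  constructor
  · rintro ⟨w, hw, h⟩
    obtain ⟨y, hy⟩ := Option.ne_none_iff_exists'.1 (fun h => hw ((hf.2 w).1 h))
    rw [hy, Option.getD_some] at h
    rcases Sym2.eq_iff.1 h with ⟨rfl, rfl⟩ | ⟨rfl, rfl⟩
    · exact Or.inl hy
    · exact Or.inr hy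
  · rintro (h | h)
    · refine ⟨u, fun hu => ?_, by simp [h]⟩
      rw [(hf.2 u).2 hu] at h; cases h
    · refine ⟨v, fun hu => ?_, by simp [h, Sym2.eq_swap]⟩
      rw [(hf.2 v).2 hu] at h; cases h

theorem adj_edg {I : Finset V} {f : V → Option V} (hf : Good I f) {u v : V} :
    (gr (edg f I)).Adj u v ↔ f u = some v ∨ f v = some u := by
  rw [SimpleGraph.fromEdgeSet_adj, mem_coe, mem_edg hf]
  constructor
  · exact fun h => h.1
  · intro h
    refine ⟨h, ?_⟩
    rcases h with h | h
    · exact hf.ne h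
    · exact (hf.ne h).symm

theorem reach_edg {I : Finset V} {f : V → Option V} (hf : Good I f) {i : V} (hi : i ∈ I) (j : V) :
    (gr (edg f I)).Reachable j i ↔ Relation.ReflTransGen (stp f) j i := by
  have hfi := (hf.2 i).2 hi
  constructor
  · intro h
    refine (inv_reach (fun u => Relation.ReflTransGen (stp f) u i) ?_ h).2
      Relation.ReflTransGen.refl
    intro u v huv
    rcases (adj_edg hf).1 huv with h | h
    · exact reach_iff hfi h
    · exact (reach_iff hfi h).symm
  · intro h
    rw [SimpleGraph.reachable_iff_reflTransGen]
    exact Relation.ReflTransGen.mono (fun u v huv => (adj_edg hf).2 (Or.inl huv)) _ _ h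

theorem ex_root {I : Finset V} {f : V → Option V} (hf : Good I f) (w : V) :
    ∃ r ∈ I, Relation.ReflTransGen (stp f) w r := by
  induction w using hf.1.induction with
  | _ w ih =>
    cases h : f w with
    | none => exact ⟨w, (hf.2 w).1 h, Relation.ReflTransGen.refl⟩
    | some v =>
      obtain ⟨r, hr, h'⟩ := ih v h
      exact ⟨r, hr, Relation.ReflTransGen.head h h'⟩

theorem not_back {I : Finset V} {f : V → Option V} (hf : Good I f) {w v : V} (h : f w = some v) :
    ¬ Relation.ReflTransGen (stp f) v w := by
  intro h'
  induction w using hf.1.induction generalizing v with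
  | _ w ih =>
    rcases Relation.ReflTransGen.cases_head h' with h1 | ⟨y, hy, h1⟩
    · exact hf.ne h h1.symm
    · exact ih v h hy (h1.tail h)

theorem rooted_edg {I : Finset V} {f : V → Option V} (hf : Good I f) : Rooted I (edg f I) := by
  refine ⟨?_, ?_, ?_⟩
  · rw [SimpleGraph.isAcyclic_iff_forall_adj_isBridge]
    have main : ∀ w v, f w = some v → (gr (edg f I)).IsBridge s(w, v) := by
      intro w v h
      rw [SimpleGraph.isBridge_iff]
      intro hr
      refine not_back hf h ((inv_reach (fun u => Relation.ReflTransGen (stp f) u w) ?_ hr).1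
        Relation.ReflTransGen.refl)
      have key : ∀ a b, s(a, b) ≠ s(w, v) → f a = some b →
          (Relation.ReflTransGen (stp f) a w ↔ Relation.ReflTransGen (stp f) b w) := by
        intro a b hne hab
        constructor
        · intro h'
          rcases Relation.ReflTransGen.cases_head h' with h1 | ⟨y, hy, h1⟩
          · subst h1
            rw [h] at hab; cases hab
            exact absurd rfl hne
          · have hy : f a = some y := hy
            rw [hab] at hy; cases hy; exact h1
        · exact fun h' => Relation.ReflTransGen.head hab h'
      intro a b hab
      rw [SimpleGraph.deleteEdges_adj, Set.mem_singleton_iff] at hab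
      rcases (adj_edg hf).1 hab.1 with h1 | h1
      · exact key a b hab.2 h1
      · exact (key b a (by rw [Sym2.eq_swap]; exact hab.2) h1).symm
    intro a b hab
    rcases (adj_edg hf).1 hab with h1 | h1
    · exact main a b h1
    · rw [Sym2.eq_swap]; exact main b a h1
  · intro r hr s hs h
    exact ((reach_root_iff ((hf.2 r).2 hr)).1 ((reach_edg hf hs r).1 h)).symm
  · intro w
    obtain ⟨r, hr, h⟩ := ex_root hf w
    exact ⟨r, hr, (reach_edg hf hr w).2 h⟩

theorem edg_inj {I : Finset V} {f g : V → Option V} (hf : Good I f) (hg : Good I g)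
    (h : edg f I = edg g I) : f = g := by
  funext w
  induction w using hf.1.induction with
  | _ w ih =>
    cases hw : f w with
    | none => exact ((hg.2 w).2 ((hf.2 w).1 hw)).symm
    | some v =>
      have h1 : s(w, v) ∈ edg g I := h ▸ (mem_edg hf).2 (Or.inl hw)
      rcases (mem_edg hg).1 h1 with h2 | h2
      · exact h2.symm
      · have := ih v hw
        rw [h2] at this
        exact (hf.not_two hw this).elim

theorem prod_edg (x : Sym2 V → R) {I : Finset V} {f : V → Option V} (hf : Good I f) :
    ∏ w, wgt x I w (f w) = ∏ e ∈ edg f I, x e := by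
  unfold edg
  rw [Finset.prod_image, ← Finset.prod_filter_mul_prod_filter_not univ (fun w => w ∉ I)]
  · rw [Finset.prod_eq_one (s := univ.filter (fun w => ¬ w ∉ I)), mul_one]
    · refine Finset.prod_congr rfl fun w hw => ?_
      have hw : w ∉ I := by simpa using hw
      obtain ⟨y, hy⟩ := Option.ne_none_iff_exists'.1 (fun h => hw ((hf.2 w).1 h))
      simp [hy, wgt, hw]
    · intro w hw
      have hw : w ∈ I := by simpa using hw
      rw [(hf.2 w).2 hw]
      simp [wgt, hw]
  · intro u hu w hw h
    have hw : w ∉ I := by simpa using hw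
    have hu : u ∉ I := by simpa using hu
    obtain ⟨y, hy⟩ := Option.ne_none_iff_exists'.1 (fun h => hw ((hf.2 w).1 h))
    obtain ⟨z, hz⟩ := Option.ne_none_iff_exists'.1 (fun h => hu ((hf.2 u).1 h))
    simp only [hy, hz, Option.getD_some] at h
    rcases Sym2.eq_iff.1 h with ⟨h1, _⟩ | ⟨h1, h2⟩
    · exact h1
    · subst h1; subst h2
      exact (hf.not_two hy hz).elim

theorem next_dist {G : SimpleGraph V} {u r : V} (h : G.Reachable u r) (hne : u ≠ r) :
    ∃ v, G.Adj u v ∧ G.dist v r < G.dist u r := by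
  obtain ⟨p, hp⟩ := h.exists_walk_length_eq_dist
  cases p with
  | nil => exact absurd rfl hne
  | @cons _ v _ h q =>
    refine ⟨v, h, ?_⟩
    have := SimpleGraph.dist_le q
    rw [SimpleGraph.Walk.length_cons] at hp
    omega

theorem edg_surj {I : Finset V} {F : Finset (Sym2 V)} (hF : Rooted I F)
    (hF' : F ⊆ (⊤ : SimpleGraph V).edgeFinset) : ∃ f, Good I f ∧ edg f I = F := by
  classical
  obtain ⟨hac, huniq, hex⟩ := hF
  choose rt hrt hreach using hex
  have hrteq : ∀ u v, (gr F).Adj u v → rt u = rt v := by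
    intro u v huv
    exact huniq _ (hrt u) _ (hrt v)
      ((hreach u).symm.trans (huv.reachable.trans (hreach v)))
  have hnext : ∀ w, w ∉ I → ∃ v, (gr F).Adj w v ∧
      (gr F).dist v (rt v) < (gr F).dist w (rt w) := by
    intro w hw
    obtain ⟨v, hv, hlt⟩ := next_dist (hreach w) (fun h => hw (h ▸ hrt w))
    exact ⟨v, hv, by rw [← hrteq w v hv]; exact hlt⟩
  choose! nx hnx hnx' using hnext
  let f : V → Option V := fun w => if w ∈ I then none else some (nx w)
  have hf1 : ∀ w v, f w = some v → w ∉ I ∧ v = nx w := by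
    intro w v h
    by_cases hw : w ∈ I
    · simp [f, hw] at h
    · simp [f, hw] at h
      exact ⟨hw, h.symm⟩
  have hf : Good I f := by
    constructor
    · refine Subrelation.wf (r := InvImage (· < ·) (fun w => (gr F).dist w (rt w))) ?_
        (InvImage.wf _ wellFounded_lt)
      intro v w h
      obtain ⟨h1, h2⟩ := hf1 w v h
      subst h2
      exact hnx' w h1
    · intro w
      by_cases hw : w ∈ I <;> simp [f, hw]
  refine ⟨f, hf, ?_⟩
  have hsub : ∀ u v, f u = some v → s(u, v) ∈ F := by
    intro u v h
    obtain ⟨h1, h2⟩ := hf1 u v h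
    subst h2
    have := hnx u h1
    rw [SimpleGraph.fromEdgeSet_adj] at this
    exact this.1
  have hsub2 : ∀ u v, s(u, v) ∈ edg f I → s(u, v) ∈ F := by
    intro u v h
    rcases (mem_edg hf).1 h with h | h
    · exact hsub _ _ h
    · rw [Sym2.eq_swap]; exact hsub _ _ h
  ext e
  induction e using Sym2.ind with
  | _ u v =>
    refine ⟨hsub2 u v, fun huv => ?_⟩
    by_contra hne
    have huv' : (gr F).Adj u v := by
      rw [SimpleGraph.fromEdgeSet_adj]
      refine ⟨huv, ?_⟩
      have := hF' huv
      simpa using this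
    have hb := (SimpleGraph.isAcyclic_iff_forall_adj_isBridge.1 hac) huv'
    rw [SimpleGraph.isBridge_iff] at hb
    apply hb
    have hle : gr (edg f I) ≤ (gr F).deleteEdges {s(u, v)} := by
      intro a b hab
      rw [SimpleGraph.deleteEdges_adj]
      rw [SimpleGraph.fromEdgeSet_adj] at hab ⊢
      refine ⟨⟨hsub2 _ _ hab.1, hab.2⟩, ?_⟩
      intro h
      rw [Set.mem_singleton_iff] at h
      exact hne (h ▸ hab.1)
    have hle2 : gr (edg f I) ≤ gr F := hle.trans (SimpleGraph.deleteEdges_le _)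
    have hr : ∀ w, (gr (edg f I)).Reachable w (rt w) := by
      intro w
      obtain ⟨r, hr, h⟩ := ex_root hf w
      have h' := (reach_edg hf hr w).2 h
      have : r = rt w := huniq _ hr _ (hrt w) ((h'.mono hle2).symm.trans (hreach w))
      rwa [← this]
    have h1 := hr u
    have h2 := hr v
    rw [← hrteq u v huv'] at h2
    exact (h1.trans h2.symm).mono hle

open Classical in
theorem det_forest (x : Sym2 V → R) (I : Finset V) (i j : V) (hiI : i ∈ I)
    (X : Matrix V V R) (hI : ∀ r ∈ I, r ≠ i → X r = Pi.single r 1)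
    (hi : X i = Pi.single j 1)
    (hX : ∀ w, w ∉ I → X w = ∑ v, x s(w, v) • (Pi.single w 1 - Pi.single v 1)) :
    X.det = ∑ F ∈ (⊤ : SimpleGraph V).edgeFinset.powerset,
      if Rooted I F ∧ (gr F).Reachable j i then ∏ e ∈ F, x e else 0 := by
  rw [det_expand x I i j hiI X hI hi hX, ← Finset.sum_filter]
  have : ∀ f : V → Option V, (∏ w, wgt x I w (f w)) *
      (if WellFounded (pre f) ∧ Relation.ReflTransGen (stp f) j i then 1 else 0) =
      if Good I f ∧ Relation.ReflTransGen (stp f) j i then ∏ w, wgt x I w (f w) else 0 := by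
    intro f
    by_cases hg : ∀ w, f w = none ↔ w ∈ I
    · have : Good I f ↔ WellFounded (pre f) := ⟨fun h => h.1, fun h => ⟨h, hg⟩⟩
      simp [this]
    · rw [if_neg (fun h : Good I f ∧ _ => hg h.1.2)]
      push Not at hg
      obtain ⟨w, hw⟩ := hg
      rw [Finset.prod_eq_zero (Finset.mem_univ w), zero_mul]
      rcases hw with ⟨h1, h2⟩ | ⟨h1, h2⟩
      · simp [h1, wgt, h2]
      · obtain ⟨y, hy⟩ := Option.ne_none_iff_exists'.1 h1
        simp [hy, wgt, h2]
  simp only [this]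
  rw [← Finset.sum_filter]
  refine Finset.sum_bij (fun f _ => edg f I) ?_ ?_ ?_ ?_
  · intro f hf
    simp only [mem_filter, mem_univ, true_and] at hf
    simp only [mem_filter, mem_powerset]
    refine ⟨?_, rooted_edg hf.1, (reach_edg hf.1 hiI j).2 hf.2⟩
    intro e
    induction e using Sym2.ind with
    | _ u v =>
      intro h
      have := ((adj_edg hf.1).2 ((mem_edg hf.1).1 h)).ne
      simpa using this
  · intro f hf g hg h
    simp only [mem_filter, mem_univ, true_and] at hf hg
    exact edg_inj hf.1 hg.1 h
  · intro F hF
    simp only [mem_filter, mem_powerset] at hF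
    obtain ⟨f, hf, rfl⟩ := edg_surj hF.2.1 hF.1
    refine ⟨f, ?_, rfl⟩
    simp only [mem_filter, mem_univ, true_and]
    exact ⟨hf, (reach_edg hf hiI j).1 hF.2.2⟩
  · intro f hf
    simp only [mem_filter, mem_univ, true_and] at hf
    exact prod_edg x hf.1

end graphs

section minors
variable {R : Type*} [CommRing R]

theorem minorDet_eq (M : Matrix ℕ ℕ R) (n : ℕ) (I J : Finset ℕ) {s : ℕ} (α β : Fin s → ℕ)
    (hα : StrictMono α) (hβ : StrictMono β) (hI : univ.image α = Finset.range n \ I)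
    (hJ : univ.image β = Finset.range n \ J) :
    minorDet M n I J = Matrix.det (Matrix.of fun i j : Fin s => M (α i) (β j)) := by
  have cI : (Finset.range n \ I).card = s := by
    rw [← hI, Finset.card_image_of_injective _ hα.injective, Finset.card_univ, Fintype.card_fin]
  have cJ : (Finset.range n \ J).card = s := by
    rw [← hJ, Finset.card_image_of_injective _ hβ.injective, Finset.card_univ, Fintype.card_fin]
  subst cI
  unfold minorDet
  rw [dif_pos cJ]
  congr 1
  ext i j
  have h1 := Finset.orderEmbOfFin_unique (s := Finset.range n \ I) rfl (f := α)
    (fun t => by rw [← hI]; exact mem_image_of_mem _ (mem_univ _)) hα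
  have h2 := Finset.orderEmbOfFin_unique (s := Finset.range n \ J) cJ (f := β)
    (fun t => by rw [← hJ]; exact mem_image_of_mem _ (mem_univ _)) hβ
  simp only [Matrix.of_apply]
  rw [h1, h2]
  rfl

theorem skip_strictMono (t : ℕ) : StrictMono (skip t) := by
  intro a b h
  unfold skip
  split_ifs <;> omega

theorem succAbove_val {N : ℕ} (p : Fin (N + 1)) (q : Fin N) :
    ((p.succAbove q : Fin (N + 1)) : ℕ) = skip p q := by
  unfold Fin.succAbove skip
  simp only [Fin.lt_def, Fin.val_castSucc]
  split_ifs <;> simp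

theorem image_skip (N c i : ℕ) (hc : c < N + 2) (hi : i < N + 1) :
    univ.image (fun t : Fin N => skip c (skip i t)) = Finset.range (N + 2) \ {c, skip c i} := by
  ext y
  simp only [mem_image, mem_univ, true_and, mem_sdiff, Finset.mem_range, mem_insert,
    mem_singleton, not_or]
  constructor
  · rintro ⟨t, rfl⟩
    have := t.2
    unfold skip
    split_ifs <;> omega
  · rintro ⟨h1, h2, h3⟩
    let z := if y < c then y else y - 1
    have hz : skip c z = y := by
      simp only [z, skip]; split_ifs <;> omega
    have hzi : z ≠ i := by
      intro h; rw [h] at hz; exact h3 hz.symm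
    have hzN : z < N + 1 := by
      simp only [z]; split_ifs <;> omega
    have hz2 : skip i (if z < i then z else z - 1) = z := by
      simp only [skip]; split_ifs <;> omega
    refine ⟨⟨if z < i then z else z - 1, by split_ifs <;> omega⟩, ?_⟩
    simp only [hz2, hz]

/-- expansion along a unit row -/
theorem det_unit_row {N : ℕ} (X : Matrix (Fin (N + 1)) (Fin (N + 1)) R) (p q : Fin (N + 1))
    (h : X p = Pi.single q 1) :
    X.det = (-1) ^ ((p : ℕ) + q) * (X.submatrix p.succAbove q.succAbove).det := by
  rw [Matrix.det_succ_row X p, Finset.sum_eq_single q]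
  · simp [h]
  · intro b _ hb
    simp [h, hb]
  · simp

theorem det_principal {n s : ℕ} (X : Matrix (Fin n) (Fin n) R) (α : Fin s → Fin n)
    (hα : Function.Injective α) (h : ∀ r, (∀ t, α t ≠ r) → X r = Pi.single r 1) :
    X.det = (X.submatrix α α).det := by
  classical
  rw [Matrix.twoBlockTriangular_det X (fun r => r ∈ Set.range α)]
  · have h1 : (X.toSquareBlockProp fun i => ¬ i ∈ Set.range α) = 1 := by
      ext ⟨u, hu⟩ ⟨w, hw⟩
      rw [Matrix.toSquareBlockProp_def, Matrix.of_apply, h u (fun t ht => hu ⟨t, ht⟩)]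
      simp [Matrix.one_apply, Pi.single_apply, eq_comm]
    rw [h1, Matrix.det_one, mul_one]
    let e : Fin s ≃ {r // r ∈ Set.range α} := Equiv.ofInjective α hα
    refine Eq.trans ?_ (Matrix.det_submatrix_equiv_self e
      (X.toSquareBlockProp fun r => r ∈ Set.range α)).symm
    congr!
  · intro u hu w hw
    rw [h u (fun t ht => hu ⟨t, ht⟩)]
    have : w ≠ u := by rintro rfl; exact hu hw
    simp [this]

theorem lap_row (a : ℕ → ℕ → R) (n : ℕ) (x : Sym2 (Fin n) → R)
    (hx : ∀ u w : Fin n, x s(u, w) = a u w) (w : Fin n) :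
    (fun u : Fin n => lap a n w u) = ∑ v, x s(w, v) • (Pi.single w 1 - Pi.single v 1) := by
  classical
  have hsum : ∑ l ∈ Finset.range n \ {(w : ℕ)}, a w l = ∑ v ∈ univ.erase w, a w v := by
    symm
    refine Finset.sum_bij (fun v _ => (v : ℕ)) ?_ ?_ ?_ ?_
    · intro v hv
      simp only [mem_erase, mem_univ, and_true] at hv
      simp [Fin.val_inj, hv]
    · intro u _ v _ h; exact Fin.ext h
    · intro b hb
      simp only [mem_sdiff, Finset.mem_range, mem_singleton] at hb
      refine ⟨⟨b, hb.1⟩, ?_, rfl⟩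
      simp [Fin.ext_iff, hb.2]
    · intros; rfl
  funext u
  rw [Finset.sum_apply]
  simp only [Pi.smul_apply, Pi.sub_apply, smul_eq_mul, hx, lap]
  by_cases hu : w = u
  · subst hu
    rw [if_pos rfl, hsum, ← Finset.add_sum_erase _ _ (mem_univ w)]
    rw [Pi.single_eq_same, sub_self, mul_zero, zero_add]
    refine Finset.sum_congr rfl fun v hv => ?_
    have : w ≠ v := (Finset.ne_of_mem_erase hv).symm
    rw [Pi.single_eq_of_ne this]; simp
  · rw [if_neg (fun h => hu (Fin.ext h))]
    rw [Finset.sum_eq_single u]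
    · simp [Pi.single_eq_of_ne (Ne.symm hu)]
    · intro v _ hv
      rw [Pi.single_eq_of_ne (Ne.symm hu), Pi.single_eq_of_ne (Ne.symm hv)]; simp
    · simp

open Classical in
/-- rooted forest sums -/
noncomputable def Phi {V : Type*} [Fintype V] [DecidableEq V] (x : Sym2 V → R) (I : Finset V)
    (j i : V) : R :=
  ∑ F ∈ (⊤ : SimpleGraph V).edgeFinset.powerset,
      if Rooted I F ∧ (gr F).Reachable j i then ∏ e ∈ F, x e else 0

/-- Laplacian with rows in `I` replaced by unit rows. -/
noncomputable def genX (a : ℕ → ℕ → R) (n : ℕ) (I : Finset (Fin n)) (i j : Fin n) :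
    Matrix (Fin n) (Fin n) R := fun w =>
  if w = i then Pi.single j 1 else if w ∈ I then Pi.single w 1 else fun u => lap a n w u

theorem det_genX (a : ℕ → ℕ → R) (n : ℕ) (x : Sym2 (Fin n) → R)
    (hx : ∀ u w : Fin n, x s(u, w) = a u w) (I : Finset (Fin n)) (i j : Fin n) (hi : i ∈ I) :
    (genX a n I i j).det = Phi x I j i := by
  unfold Phi
  convert det_forest x I i j hi (genX a n I i j) ?_ ?_ ?_
  · intro r hr hri; simp [genX, hr, hri]
  · simp [genX]
  · intro w hw
    have : w ≠ i := by rintro rfl; exact hw hi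
    rw [← lap_row a n x hx w]
    simp [genX, hw, this]

theorem first_minor (a : ℕ → ℕ → R) (N : ℕ) (x : Sym2 (Fin (N + 2)) → R)
    (hx : ∀ u w : Fin (N + 2), x s(u, w) = a u w) (c i j : ℕ) (hc : c < N + 2)
    (hi : i < N + 1) (hj : j < N + 1) (C Iv Jv : Fin (N + 2)) (hC : (C : ℕ) = c)
    (hIv : (Iv : ℕ) = skip c i) (hJv : (Jv : ℕ) = skip c j) :
    (-1 : R) ^ (i + j) * minorDet (lap a (N + 2)) (N + 2) {c, skip c i} {c, skip c j} =
      Phi x {C, Iv} Jv Iv := by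
  have hCI : C ≠ Iv := by
    intro h
    rw [Fin.ext_iff, hC, hIv] at h
    unfold skip at h; split_ifs at h <;> omega
  have hCJ : C ≠ Jv := by
    intro h
    rw [Fin.ext_iff, hC, hJv] at h
    unfold skip at h; split_ifs at h <;> omega
  rw [minorDet_eq _ _ _ _ (fun t : Fin N => skip c (skip i t)) (fun t : Fin N => skip c (skip j t))
    (fun s t h => skip_strictMono c (skip_strictMono i h))
    (fun s t h => skip_strictMono c (skip_strictMono j h))
    (image_skip N c i hc hi) (image_skip N c j hc hj)]
  rw [← det_genX a (N + 2) x hx _ _ _ (by simp)]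
  rw [det_unit_row _ C C (by simp [genX, hCI])]
  have hsI : C.succAbove ⟨i, hi⟩ = Iv := by
    apply Fin.ext; rw [succAbove_val, hC, hIv]
  have hsJ : C.succAbove ⟨j, hj⟩ = Jv := by
    apply Fin.ext; rw [succAbove_val, hC, hJv]
  rw [det_unit_row (Matrix.submatrix _ _ _) ⟨i, hi⟩ ⟨j, hj⟩]
  · rw [← two_mul, pow_mul, neg_one_sq, one_pow, one_mul]
    congr 2
    ext s t
    have e1 : C.succAbove (Fin.succAbove ⟨i, hi⟩ s) ≠ Iv := by
      rw [← hsI]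
      intro h
      exact Fin.succAbove_ne _ _ (Fin.succAbove_right_injective h)
    have e2 : C.succAbove (Fin.succAbove ⟨i, hi⟩ s) ≠ C := Fin.succAbove_ne _ _
    simp only [Matrix.of_apply, Matrix.submatrix_apply, genX, mem_insert,
      mem_singleton, e1, e2, or_self, if_false, succAbove_val, hC]
  · funext t
    rw [Matrix.submatrix_apply, hsI]
    simp only [genX, if_true]
    rw [← hsJ]
    by_cases ht : t = ⟨j, hj⟩
    · subst ht; simp
    · rw [Pi.single_eq_of_ne ht, Pi.single_eq_of_ne]
      intro h
      exact ht (Fin.succAbove_right_injective h)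

/-- increasing enumeration of `{y} ∪ [m, n)` -/
def enu (m y : ℕ) (t : ℕ) : ℕ := if t = 0 then y else m + t - 1

theorem enu_mono (m y s : ℕ) (hy : y < m) : StrictMono (fun t : Fin s => enu m y t) := by
  intro p q h
  have : (p : ℕ) < q := h
  simp only [enu]
  split_ifs <;> omega

theorem enu_image (n m y : ℕ) (hy : y < m) (hm : m ≤ n) :
    univ.image (fun t : Fin (n - m + 1) => enu m y t) =
      Finset.range n \ (Finset.range m \ {y}) := by
  ext z
  simp only [mem_image, mem_univ, true_and, mem_sdiff, Finset.mem_range, mem_singleton, enu]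
  constructor
  · rintro ⟨t, rfl⟩
    have := t.2
    split_ifs <;> omega
  · rintro ⟨h1, h2⟩
    by_cases hz : z = y
    · exact ⟨⟨0, by omega⟩, by simp [hz]⟩
    · refine ⟨⟨z - m + 1, by omega⟩, ?_⟩
      simp only [Nat.add_eq_zero_iff, one_ne_zero, and_false, if_false]
      omega

theorem enu_lt {n m y t : ℕ} (hy : y < m) (hm : m ≤ n) (ht : t < n - m + 1) : enu m y t < n := by
  unfold enu; split_ifs <;> omega

/-- marked vertices except `y` -/
def mk (n m y : ℕ) : Finset (Fin n) := univ.filter (fun u => (u : ℕ) < m ∧ (u : ℕ) ≠ y)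

theorem second_minor_eq (a : ℕ → ℕ → R) (n m : ℕ) (hm : m ≤ n) (x : Sym2 (Fin n) → R)
    (hx : ∀ u w : Fin n, x s(u, w) = a u w) (j : ℕ) (hj : j < m) (C : Fin n)
    (hC : C ∈ mk n m j) :
    minorDet (lap a n) n (Finset.range m \ {j}) (Finset.range m \ {j}) =
      Phi x (mk n m j) C C := by
  rw [minorDet_eq _ _ _ _ _ _ (enu_mono m j _ hj) (enu_mono m j _ hj) (enu_image n m j hj hm)
    (enu_image n m j hj hm), ← det_genX a n x hx _ _ _ hC]
  rw [det_principal (genX a n (mk n m j) C C)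
    (fun t : Fin (n - m + 1) => ⟨enu m j t, enu_lt hj hm t.2⟩)]
  · congr 1
    ext s t
    have e : (⟨enu m j s, enu_lt hj hm s.2⟩ : Fin n) ∉ mk n m j := by
      simp only [mk, mem_filter, mem_univ, true_and, enu]
      split_ifs <;> omega
    have e2 : (⟨enu m j s, enu_lt hj hm s.2⟩ : Fin n) ≠ C := fun h => e (h ▸ hC)
    simp only [Matrix.of_apply, Matrix.submatrix_apply, genX, if_neg e, if_neg e2]
  · intro s t h
    exact (enu_mono m j _ hj).injective (Fin.ext_iff.1 h)
  · intro r hr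
    have hr' : r ∈ mk n m j := by
      simp only [mk, mem_filter, mem_univ, true_and]
      by_contra hcon
      have : (r : ℕ) ∈ univ.image (fun t : Fin (n - m + 1) => enu m j t) := by
        rw [enu_image n m j hj hm]
        simp only [mem_sdiff, Finset.mem_range, mem_singleton]
        exact ⟨r.2, hcon⟩
      simp only [mem_image, mem_univ, true_and] at this
      obtain ⟨t, ht⟩ := this
      exact hr t (Fin.ext ht)
    by_cases h : r = C
    · subst h; simp [genX]
    · simp [genX, h, hr']

theorem second_minor_ne (a : ℕ → ℕ → R) (n m : ℕ) (hm : m ≤ n) (x : Sym2 (Fin n) → R)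
    (hx : ∀ u w : Fin n, x s(u, w) = a u w) (i j : ℕ) (hi : i < m) (hj : j < m) (hij : i ≠ j)
    (Iv Jv : Fin n) (hIv : (Iv : ℕ) = i) (hJv : (Jv : ℕ) = j) :
    minorDet (lap a n) n (Finset.range m \ {i}) (Finset.range m \ {j}) =
      - Phi x (mk n m i) Iv Jv := by
  have hJI : Jv ≠ Iv := by intro h; rw [Fin.ext_iff] at h; omega
  have hJm : Jv ∈ mk n m i := by
    simp only [mk, mem_filter, mem_univ, true_and]; omega
  have hIm : Iv ∉ mk n m i := by
    simp only [mk, mem_filter, mem_univ, true_and]; omega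
  rw [minorDet_eq _ _ _ _ _ _ (enu_mono m i _ hi) (enu_mono m j _ hj) (enu_image n m i hi hm)
    (enu_image n m j hj hm), ← det_genX a n x hx _ _ _ hJm]
  have hsw := Matrix.det_permute (Equiv.swap Jv Iv) (genX a n (mk n m i) Jv Iv)
  rw [Equiv.Perm.sign_swap hJI] at hsw
  simp only [Units.val_neg, Units.val_one, Int.cast_neg, Int.cast_one, neg_mul, one_mul] at hsw
  rw [← hsw]
  rw [det_principal (Matrix.submatrix _ _ _)
    (fun t : Fin (n - m + 1) => ⟨enu m j t, enu_lt hj hm t.2⟩)]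
  · congr 1
    ext s t
    have e : Equiv.swap Jv Iv (⟨enu m j s, enu_lt hj hm s.2⟩ : Fin n) =
        ⟨enu m i s, enu_lt hi hm s.2⟩ := by
      by_cases hs : (s : ℕ) = 0
      · have h1 : (⟨enu m j s, enu_lt hj hm s.2⟩ : Fin n) = Jv := by
          apply Fin.ext; simp [enu, hs, hJv]
        rw [h1, Equiv.swap_apply_left]
        apply Fin.ext; simp [enu, hs, hIv]
      · rw [Equiv.swap_apply_of_ne_of_ne]
        · apply Fin.ext; simp [enu, hs]
        · intro h; rw [Fin.ext_iff] at h; simp only [enu, hs, if_false] at h; omega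
        · intro h; rw [Fin.ext_iff] at h; simp only [enu, hs, if_false] at h; omega
    have e1 : (⟨enu m i s, enu_lt hi hm s.2⟩ : Fin n) ∉ mk n m i := by
      simp only [mk, mem_filter, mem_univ, true_and, enu]
      split_ifs <;> omega
    have e2 : (⟨enu m i s, enu_lt hi hm s.2⟩ : Fin n) ≠ Jv := fun h => e1 (h ▸ hJm)
    simp only [Matrix.of_apply, Matrix.submatrix_apply, e, id, genX, if_neg e1, if_neg e2]
  · intro s t h
    exact (enu_mono m j _ hj).injective (Fin.ext_iff.1 h)
  · intro r hr
    have hr' : r ∈ mk n m j := by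
      simp only [mk, mem_filter, mem_univ, true_and]
      by_contra hcon
      have : (r : ℕ) ∈ univ.image (fun t : Fin (n - m + 1) => enu m j t) := by
        rw [enu_image n m j hj hm]
        simp only [mem_sdiff, Finset.mem_range, mem_singleton]
        exact ⟨r.2, hcon⟩
      simp only [mem_image, mem_univ, true_and] at this
      obtain ⟨t, ht⟩ := this
      exact hr t (Fin.ext ht)
    simp only [mk, mem_filter, mem_univ, true_and] at hr'
    have hrJ : r ≠ Jv := by rintro rfl; exact hr'.2 hJv
    funext u
    by_cases h : r = Iv
    · subst h
      simp [genX]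
    · have hrm : r ∈ mk n m i := by
        simp only [mk, mem_filter, mem_univ, true_and]
        refine ⟨hr'.1, fun h' => h (Fin.ext (by omega))⟩
      rw [Matrix.submatrix_apply, Equiv.swap_apply_of_ne_of_ne hrJ h]
      simp [genX, hrJ, hrm]

end minors

section assembly
variable {V : Type*} [Fintype V] [DecidableEq V] {R : Type*} [CommRing R]

theorem ite_cg {p q : Prop} {dp : Decidable p} {dq : Decidable q} (h : p ↔ q) {a b : R} :
    (@ite R p dp a b) = (@ite R q dq a b) := by
  by_cases hp : p
  · rw [if_pos hp, if_pos (h.1 hp)]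
  · rw [if_neg hp, if_neg (fun hq => hp (h.2 hq))]

theorem compat_iff {m : ℕ} (v : Fin m → V) (p : Fin m → Option ℕ) (F : Finset (Sym2 V))
    (hF : F ⊆ (⊤ : SimpleGraph V).edgeFinset)
    (I : Finset V) (ρ : Fin m → V) (hp0 : ∀ i, p i ≠ none) (hρ : ∀ i, ρ i ∈ I)
    (hp : ∀ i j, p i = p j ↔ ρ i = ρ j) (hI : ∀ r ∈ I, ∃ i, v i = r ∧ ρ i = r) :
    IsCompatibleForest (⊤ : SimpleGraph V) v p F ↔
      Rooted I F ∧ ∀ i, (gr F).Reachable (v i) (ρ i) := by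
  constructor
  · rintro ⟨-, h2, h3, h4⟩
    have hr : ∀ i, (gr F).Reachable (v i) (ρ i) := by
      intro i
      obtain ⟨i', h5, h6⟩ := hI _ (hρ i)
      rw [← h5]
      exact (h3 i i' (hp0 _) (hp0 _)).2 ((hp i i').2 h6.symm)
    refine ⟨⟨h2, ?_, ?_⟩, hr⟩
    · intro r hr s hs h
      obtain ⟨i, h5, h6⟩ := hI r hr
      obtain ⟨i', h7, h8⟩ := hI s hs
      rw [← h5, ← h7] at h
      rw [← h6, ← h8]
      exact (hp _ _).1 ((h3 i i' (hp0 _) (hp0 _)).1 h)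
    · intro w
      obtain ⟨i, -, h⟩ := h4 w
      exact ⟨ρ i, hρ i, SimpleGraph.Reachable.trans h (hr i)⟩
  · rintro ⟨⟨h1, h2, h3⟩, h4⟩
    refine ⟨?_, h1, ?_, ?_⟩
    · intro e he
      have := hF (mem_coe.1 he)
      exact SimpleGraph.mem_edgeFinset.1 this
    · intro i j _ _
      rw [hp i j]
      constructor
      · intro h
        exact h2 _ (hρ i) _ (hρ j) ((h4 i).symm.trans (SimpleGraph.Reachable.trans h (h4 j)))
      · intro h
        have := h4 i
        rw [h] at this
        exact this.trans (h4 j).symm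
    · intro w
      obtain ⟨r, hr, h⟩ := h3 w
      obtain ⟨i, h5, -⟩ := hI r hr
      exact ⟨i, hp0 i, h5 ▸ h⟩

open Classical in
theorem forestPoly_eq {m : ℕ} (x : Sym2 V → R) (v : Fin m → V) (p : Fin m → Option ℕ)
    (I : Finset V) (ρ : Fin m → V) (hp0 : ∀ i, p i ≠ none) (hρ : ∀ i, ρ i ∈ I)
    (hp : ∀ i j, p i = p j ↔ ρ i = ρ j) (hI : ∀ r ∈ I, ∃ i, v i = r ∧ ρ i = r) :
    forestPoly (⊤ : SimpleGraph V) x v p =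
      ∑ F ∈ (⊤ : SimpleGraph V).edgeFinset.powerset,
      if Rooted I F ∧ ∀ i, (gr F).Reachable (v i) (ρ i) then ∏ e ∈ F, x e else 0 := by
  unfold forestPoly
  refine Finset.sum_congr ?_ fun F hF => ?_
  · congr!
  · have := compat_iff v p F (by convert mem_powerset.1 hF) I ρ hp0 hρ hp hI
    simp only [this]

theorem rooted_swap (F : Finset (Sym2 V)) (c i j : V) (hij : (gr F).Reachable i j)
    (hci : c ≠ i) (hcj : c ≠ j) (h : Rooted {c, i} F) : Rooted {c, j} F := by
  obtain ⟨h1, h2, h3⟩ := h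
  have hn : ¬ (gr F).Reachable c i := fun h => hci (h2 c (by simp) i (by simp) h)
  refine ⟨h1, ?_, ?_⟩
  · intro r hr s hs h
    simp only [mem_insert, mem_singleton] at hr hs
    rcases hr with rfl | rfl <;> rcases hs with rfl | rfl
    · rfl
    · exact (hn (h.trans hij.symm)).elim
    · exact (hn (h.symm.trans hij.symm)).elim
    · rfl
  · intro w
    obtain ⟨r, hr, h⟩ := h3 w
    simp only [mem_insert, mem_singleton] at hr
    rcases hr with rfl | rfl
    · exact ⟨r, by simp, h⟩
    · exact ⟨j, by simp, h.trans hij⟩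

theorem Phi_swap (x : Sym2 V → R) (c i j : V) (hci : c ≠ i) (hcj : c ≠ j) :
    Phi x {c, i} j i = Phi x {c, j} i j := by
  unfold Phi
  refine Finset.sum_congr rfl fun F _ => ?_
  have : (Rooted {c, i} F ∧ (gr F).Reachable j i) ↔ (Rooted {c, j} F ∧ (gr F).Reachable i j) :=
    ⟨fun h => ⟨rooted_swap F c i j h.2.symm hci hcj h.1, h.2.symm⟩,
      fun h => ⟨rooted_swap F c j i h.2.symm hcj hci h.1, h.2.symm⟩⟩
  exact ite_cg this

theorem Phi_split (x : Sym2 V → R) (c j l : V) (hcj : c ≠ j) :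
    Phi x {c, j} j j = Phi x {c, j} l c + Phi x {c, j} l j := by
  unfold Phi
  rw [← Finset.sum_add_distrib]
  refine Finset.sum_congr rfl fun F _ => ?_
  by_cases hR : Rooted {c, j} F
  · obtain ⟨r, hr, h⟩ := hR.2.2 l
    have hn : ¬ ((gr F).Reachable l c ∧ (gr F).Reachable l j) := fun h =>
      hcj (hR.2.1 c (by simp) j (by simp) (h.1.symm.trans h.2))
    simp only [mem_insert, mem_singleton] at hr
    rcases hr with rfl | rfl
    · have h' : ¬ (gr F).Reachable l j := fun h' => hn ⟨h, h'⟩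
      simp [hR, h, h']
    · have h' : ¬ (gr F).Reachable l c := fun h' => hn ⟨h', h⟩
      simp [hR, h, h']
  · simp [hR]

theorem Phi_zero (x : Sym2 V → R) (c j : V) (hcj : c ≠ j) : Phi x {c, j} c j = 0 := by
  unfold Phi
  refine Finset.sum_eq_zero fun F _ => ?_
  rw [if_neg]
  rintro ⟨h1, h2⟩
  exact hcj (h1.2.1 c (by simp) j (by simp) h2)

theorem Phi_total (x : Sym2 V → R) (I : Finset V) (c j : V) :
    Phi x I c c = ∑ l ∈ I, Phi x I j l := by
  unfold Phi
  rw [Finset.sum_comm]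
  refine Finset.sum_congr rfl fun F _ => ?_
  by_cases hR : Rooted I F
  · obtain ⟨r, hr, h⟩ := hR.2.2 j
    rw [Finset.sum_eq_single_of_mem r hr]
    · simp [hR, h]
    · intro b hb hbr
      rw [if_neg]
      rintro ⟨-, h2⟩
      exact hbr (hR.2.1 b hb r hr (h2.symm.trans h))
  · simp [hR]

theorem partA1 (n m : ℕ) (hm : m ≤ n) (x : Sym2 (Fin n) → R) (j l : ℕ) (hj : j < m) (hl : l < m)
    (hlj : l ≠ j) (Jv Lv : Fin n) (hJv : (Jv : ℕ) = j) (hLv : (Lv : ℕ) = l) :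
    forestPoly (⊤ : SimpleGraph (Fin n)) x (Fin.castLE hm)
      (fun i => if (i : ℕ) = l then some j else some (i : ℕ)) = Phi x (mk n m l) Lv Jv := by
  rw [forestPoly_eq x (Fin.castLE hm) _ (mk n m l)
    (fun i => if (i : ℕ) = l then Jv else Fin.castLE hm i)]
  · unfold Phi
    refine Finset.sum_congr rfl fun F _ => ?_
    have : (∀ i : Fin m, (gr F).Reachable (Fin.castLE hm i)
        (if (i : ℕ) = l then Jv else Fin.castLE hm i)) ↔ (gr F).Reachable Lv Jv := by
      constructor
      · intro h
        have := h ⟨l, hl⟩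
        rw [if_pos rfl] at this
        convert this using 1
        apply Fin.ext; simp [hLv, hJv]
      · intro h i
        split_ifs with hi
        · convert h
          apply Fin.ext; simp [hi, hLv]
        · exact SimpleGraph.Reachable.refl _
    exact ite_cg (and_congr_right fun _ => this)
  · intro i; split_ifs <;> simp
  · intro i
    simp only [mk, mem_filter, mem_univ, true_and]
    have := i.2
    split_ifs with h
    · omega
    · simp only [Fin.val_castLE]; omega
  · intro i i'
    split_ifs with h1 h2 h2 <;> simp [Fin.ext_iff, hJv]
  · intro r hr
    simp only [mk, mem_filter, mem_univ, true_and] at hr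
    exact ⟨⟨r, hr.1⟩, rfl, by simp [hr.2]⟩

theorem partA2 (n m : ℕ) (hm : m ≤ n) (x : Sym2 (Fin n) → R) (j l : ℕ) (hj : j < m) (hl : l < m)
    (hlj : l ≠ j) (Jv Lv : Fin n) (hJv : (Jv : ℕ) = j) (hLv : (Lv : ℕ) = l) :
    forestPoly (⊤ : SimpleGraph (Fin n)) x (Fin.castLE hm)
      (fun i => if (i : ℕ) = l then some j else some (i : ℕ)) = Phi x (mk n m j) Jv Lv := by
  rw [forestPoly_eq x (Fin.castLE hm) _ (mk n m j)
    (fun i => if (i : ℕ) = j then Lv else Fin.castLE hm i)]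
  · unfold Phi
    refine Finset.sum_congr rfl fun F _ => ?_
    have : (∀ i : Fin m, (gr F).Reachable (Fin.castLE hm i)
        (if (i : ℕ) = j then Lv else Fin.castLE hm i)) ↔ (gr F).Reachable Jv Lv := by
      constructor
      · intro h
        have := h ⟨j, hj⟩
        rw [if_pos rfl] at this
        convert this using 1
        apply Fin.ext; simp [hLv, hJv]
      · intro h i
        split_ifs with hi
        · convert h
          apply Fin.ext; simp [hi, hJv]
        · exact SimpleGraph.Reachable.refl _
    exact ite_cg (and_congr_right fun _ => this)
  · intro i; split_ifs <;> simp
  · intro i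
    simp only [mk, mem_filter, mem_univ, true_and]
    have := i.2
    split_ifs with h
    · omega
    · simp only [Fin.val_castLE]; omega
  · intro i i'
    split_ifs <;> simp only [Option.some.injEq, Fin.ext_iff, Fin.val_castLE, hLv, true_iff, iff_true] <;> omega
  · intro r hr
    simp only [mk, mem_filter, mem_univ, true_and] at hr
    exact ⟨⟨r, hr.1⟩, rfl, by simp [hr.2]⟩

theorem partB (n m : ℕ) (hm : m ≤ n) (x : Sym2 (Fin n) → R) (c j l : ℕ) (hc : c < m) (hj : j < m)
    (hl : l < m) (hcj : c ≠ j) (C Jv Lv : Fin n) (hC : (C : ℕ) = c) (hJv : (Jv : ℕ) = j)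
    (hLv : (Lv : ℕ) = l) :
    ∑ S ∈ (Finset.range m).powerset.filter (fun S => j ∈ S ∧ c ∉ S ∧ l ∉ S),
      forestPoly (⊤ : SimpleGraph (Fin n)) x (Fin.castLE hm)
        (fun i => if (i : ℕ) ∈ S then some 0 else some 1) = Phi x {C, Jv} Lv C := by
  classical
  have hCJ : C ≠ Jv := by intro h; rw [Fin.ext_iff] at h; omega
  have hS : ∀ S ∈ (Finset.range m).powerset.filter (fun S => j ∈ S ∧ c ∉ S ∧ l ∉ S),
      forestPoly (⊤ : SimpleGraph (Fin n)) x (Fin.castLE hm)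
        (fun i => if (i : ℕ) ∈ S then some 0 else some 1) =
      ∑ F ∈ (⊤ : SimpleGraph (Fin n)).edgeFinset.powerset,
      if Rooted {C, Jv} F ∧ ∀ i : Fin m, (gr F).Reachable (Fin.castLE hm i)
        (if (i : ℕ) ∈ S then Jv else C) then ∏ e ∈ F, x e else 0 := by
    intro S hS
    simp only [mem_filter, mem_powerset] at hS
    obtain ⟨h1, h2, h3, h4⟩ := hS
    rw [forestPoly_eq x (Fin.castLE hm) _ {C, Jv}
      (fun i => if (i : ℕ) ∈ S then Jv else C)]
    · intro i; split_ifs <;> simp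
    · intro i; split_ifs <;> simp
    · intro i i'; split_ifs <;> simp [hCJ, hCJ.symm]
    · intro r hr
      simp only [mem_insert, mem_singleton] at hr
      rcases hr with rfl | rfl
      · exact ⟨⟨r, by omega⟩, rfl, by simp [hC, h3]⟩
      · exact ⟨⟨r, by omega⟩, rfl, by simp [hJv, h2]⟩
  rw [Finset.sum_congr rfl hS, Finset.sum_comm]
  unfold Phi
  refine Finset.sum_congr (by congr!) fun F _ => ?_
  by_cases hR : Rooted {C, Jv} F
  · have hno : ∀ w, (gr F).Reachable w C → (gr F).Reachable w Jv → False := fun w h1 h2 =>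
      hCJ (hR.2.1 C (by simp) Jv (by simp) (h1.symm.trans h2))
    have hor : ∀ w, (gr F).Reachable w C ∨ (gr F).Reachable w Jv := by
      intro w
      obtain ⟨r, hr, h⟩ := hR.2.2 w
      simp only [mem_insert, mem_singleton] at hr
      rcases hr with rfl | rfl
      · exact Or.inl h
      · exact Or.inr h
    have hval : ∀ (t : ℕ) (ht : t < m) (T : Fin n), (T : ℕ) = t →
        Fin.castLE hm ⟨t, ht⟩ = T := by
      intro t ht T hT; apply Fin.ext; simp [hT]
    let S0 : Finset ℕ := (Finset.range m).filter
      (fun t => ∃ h : t < m, (gr F).Reachable (Fin.castLE hm ⟨t, h⟩) Jv)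
    have hS0 : ∀ i : Fin m, (i : ℕ) ∈ S0 ↔ (gr F).Reachable (Fin.castLE hm i) Jv := by
      intro i
      simp only [S0, mem_filter, Finset.mem_range]
      exact ⟨fun h => h.2.2, fun h => ⟨i.2, i.2, h⟩⟩
    have huniq : ∀ S ⊆ Finset.range m, (∀ i : Fin m, (gr F).Reachable (Fin.castLE hm i)
        (if (i : ℕ) ∈ S then Jv else C)) → S = S0 := by
      intro S hSm h
      ext t
      by_cases ht : t < m
      · have h' := h ⟨t, ht⟩
        rw [hS0 ⟨t, ht⟩]
        by_cases htS : t ∈ S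
        · simp only [htS, if_true] at h'
          exact ⟨fun _ => h', fun _ => htS⟩
        · simp only [htS, if_false] at h'
          exact ⟨fun h1 => absurd h1 htS, fun h1 => (hno _ h' h1).elim⟩
      · constructor
        · intro h1; exact absurd (Finset.mem_range.1 (hSm h1)) ht
        · intro h1; exact absurd (Finset.mem_range.1 (Finset.mem_filter.1 h1).1) ht
    by_cases hLC : (gr F).Reachable Lv C
    · rw [if_pos ⟨hR, hLC⟩, Finset.sum_eq_single_of_mem S0]
      · rw [if_pos]
        refine ⟨hR, fun i => ?_⟩
        by_cases hi : (i : ℕ) ∈ S0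
        · rw [if_pos hi]; exact (hS0 i).1 hi
        · rw [if_neg hi]
          exact (hor _).resolve_right fun h => hi ((hS0 i).2 h)
      · simp only [mem_filter, mem_powerset]
        refine ⟨Finset.filter_subset _ _, ?_, ?_, ?_⟩
        · rw [hS0 ⟨j, hj⟩, hval j hj Jv hJv]
        · rw [hS0 ⟨c, hc⟩, hval c hc C hC]
          exact fun h => hno _ (SimpleGraph.Reachable.refl _) h
        · rw [hS0 ⟨l, hl⟩, hval l hl Lv hLv]
          exact fun h => hno _ hLC h
      · intro S hS hne
        rw [if_neg]
        rintro ⟨-, h⟩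
        simp only [mem_filter, mem_powerset] at hS
        exact hne (huniq S hS.1 h)
    · rw [if_neg (fun h => hLC h.2)]
      refine Finset.sum_eq_zero fun S hS => ?_
      rw [if_neg]
      rintro ⟨-, h⟩
      simp only [mem_filter, mem_powerset] at hS
      have := h ⟨l, hl⟩
      rw [if_neg hS.2.2.2, hval l hl Lv hLv] at this
      exact hLC this
  · simp [hR]

end assembly

end EM

/-- **Lemma 2.11 ("exactmonomial").**  Fix `c < m` and a column expansion index
`j' < k = m − 1`, corresponding to the marked vertex `jv = skip c j'`.  A *permissible
monomial* is a pair `(A, B)`: `A` pairs `jv` with some vertex `ℓ ≠ jv` (all other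
vertices singletons), and `B` has two parts with `jv` in one part and both `c` and `ℓ`
in the other.  Then the right-hand side of `L_{c,c}(j')` equals exactly the sum of all
permissible monomials, each with coefficient `+1`, where each partition is evaluated as
a spanning forest polynomial of the complete graph on `n ≥ m` vertices with symmetric
edge weights `a` and the first `m` vertices marked. -/
theorem exact_monomial {R : Type*} [CommRing R] (n m k : ℕ) (hm : m ≤ n)
    (hk : m = k + 1) (a : ℕ → ℕ → R) (hsym : ∀ i j, a i j = a j i)
    (c j' : ℕ) (hc : c < m) (hj' : j' < k) :
    let jv := skip c j'
    let x : Sym2 (Fin n) → R := Sym2.lift ⟨fun u w => a u w, fun u w => hsym u w⟩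
    let v : Fin m → Fin n := Fin.castLE hm
    lapRHS a n m c c j' =
      ∑ ℓ ∈ (Finset.range m).erase jv,
        ∑ S ∈ (Finset.range m).powerset.filter (fun S => jv ∈ S ∧ c ∉ S ∧ ℓ ∉ S),
          forestPoly (⊤ : SimpleGraph (Fin n)) x v
              (fun i => if (i : ℕ) = ℓ then some jv else some (i : ℕ)) *
            forestPoly (⊤ : SimpleGraph (Fin n)) x v
              (fun i => if (i : ℕ) ∈ S then some 0 else some 1) := by
  intro jv x v
  have hx : ∀ u w : Fin n, x s(u, w) = a u w := fun u w => rfl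
  have hjv : jv < m := by
    simp only [jv, skip]; split_ifs <;> omega
  have hcj : c ≠ jv := by
    simp only [jv, skip]; split_ifs <;> omega
  obtain ⟨N, rfl⟩ : ∃ N, n = N + 2 := ⟨n - 2, by omega⟩
  let T : ℕ → Fin (N + 2) := fun t => Fin.ofNat (N + 2) t
  have hT : ∀ t, t < m → (T t : ℕ) = t := by
    intro t ht
    simp only [T, Fin.ofNat]
    exact Nat.mod_eq_of_lt (by omega)
  have hTinj : ∀ s t, s < m → t < m → T s = T t → s = t := by
    intro s t hs ht h
    rw [← hT s hs, ← hT t ht, h]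
  have hTcj : T c ≠ T jv := fun h => hcj (hTinj _ _ hc hjv h)
  let A : ℕ → R := fun l => forestPoly (⊤ : SimpleGraph (Fin (N + 2))) x v
              (fun i => if (i : ℕ) = l then some jv else some (i : ℕ))
  let Q : ℕ → R := fun l => EM.Phi x {T c, T jv} (T l) (T jv)
  -- right-hand side
  have hR : ∑ ℓ ∈ (Finset.range m).erase jv,
        ∑ S ∈ (Finset.range m).powerset.filter (fun S => jv ∈ S ∧ c ∉ S ∧ ℓ ∉ S),
          forestPoly (⊤ : SimpleGraph (Fin (N + 2))) x v
              (fun i => if (i : ℕ) = ℓ then some jv else some (i : ℕ)) *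
            forestPoly (⊤ : SimpleGraph (Fin (N + 2))) x v
              (fun i => if (i : ℕ) ∈ S then some 0 else some 1) =
      ∑ ℓ ∈ (Finset.range m).erase jv, A ℓ * (Q jv - Q ℓ) := by
    refine Finset.sum_congr rfl fun l hl => ?_
    have hlm : l < m := Finset.mem_range.1 (Finset.mem_of_mem_erase hl)
    rw [← Finset.mul_sum]
    congr 1
    rw [EM.partB (N + 2) m hm x c jv l hc hjv hlm hcj (T c) (T jv) (T l) (hT _ hc) (hT _ hjv)
      (hT _ hlm)]
    simp only [Q]
    rw [EM.Phi_split x (T c) (T jv) (T l) hTcj]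
    ring
  rw [hR]
  -- the total sum
  have hTot : EM.Phi x (EM.mk (N + 2) m jv) (T c) (T c) = ∑ l ∈ (Finset.range m).erase jv, A l := by
    rw [EM.Phi_total x _ (T c) (T jv)]
    symm
    refine Finset.sum_bij (fun l _ => T l) ?_ ?_ ?_ ?_
    · intro l hl
      simp only [Finset.mem_erase, Finset.mem_range] at hl
      simp only [EM.mk, Finset.mem_filter, Finset.mem_univ, true_and, hT l hl.2]
      exact ⟨hl.2, hl.1⟩
    · intro s hs t ht h
      simp only [Finset.mem_erase, Finset.mem_range] at hs ht
      exact hTinj s t hs.2 ht.2 h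
    · intro b hb
      simp only [EM.mk, Finset.mem_filter, Finset.mem_univ, true_and] at hb
      refine ⟨b, ?_, Fin.ext (hT b hb.1)⟩
      simp only [Finset.mem_erase, Finset.mem_range]
      exact ⟨hb.2, hb.1⟩
    · intro l hl
      simp only [Finset.mem_erase, Finset.mem_range] at hl
      exact EM.partA2 (N + 2) m hm x jv l hjv hl.2 hl.1 (T jv) (T l) (hT _ hjv) (hT _ hl.2)
  let g : ℕ → R := fun y => Q y * (if y = jv then ∑ l ∈ (Finset.range m).erase jv, A l else -A y)
  have hL : lapRHS a (N + 2) m c c j' = ∑ i ∈ Finset.range k, g (skip c i) := by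
    unfold lapRHS
    rw [← two_mul, pow_mul, neg_one_sq, one_pow, one_mul, hk, Nat.add_sub_cancel]
    refine Finset.sum_congr rfl fun i hi => ?_
    have hik : i < k := Finset.mem_range.1 hi
    have him : skip c i < m := by
      simp only [skip]; split_ifs <;> omega
    have hci : c ≠ skip c i := by
      simp only [skip]; split_ifs <;> omega
    rw [← hk, ← mul_assoc]
    rw [EM.first_minor a N x hx c i j' (by omega) (by omega) (by omega) (T c) (T (skip c i)) (T jv)
      (hT _ hc) (hT _ him) (hT _ hjv)]
    rw [EM.Phi_swap x (T c) (T (skip c i)) (T jv) (fun h => hci (hTinj _ _ hc him h)) hTcj]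
    simp only [g, Q]
    congr 1
    by_cases hij : skip c i = jv
    · rw [if_pos hij, hij]
      change minorDet (lap a (N + 2)) (N + 2) (Finset.range m \ {jv}) (Finset.range m \ {jv}) = _
      rw [EM.second_minor_eq a (N + 2) m hm x hx jv hjv (T c), hTot]
      simp only [EM.mk, Finset.mem_filter, Finset.mem_univ, true_and, hT c hc]
      exact ⟨hc, hcj⟩
    · rw [if_neg hij]
      change minorDet (lap a (N + 2)) (N + 2) (Finset.range m \ {skip c i})
        (Finset.range m \ {jv}) = _
      rw [EM.second_minor_ne a (N + 2) m hm x hx (skip c i) jv him hjv hij (T (skip c i)) (T jv)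
        (hT _ him) (hT _ hjv)]
      congr 1
      exact (EM.partA1 (N + 2) m hm x jv (skip c i) hjv him hij (T jv) (T (skip c i))
        (hT _ hjv) (hT _ him)).symm
  have hL2 : ∑ i ∈ Finset.range k, g (skip c i) = ∑ y ∈ (Finset.range m).erase c, g y := by
    refine Finset.sum_bij (fun i _ => skip c i) ?_ ?_ ?_ ?_
    · intro i hi
      have := Finset.mem_range.1 hi
      simp only [Finset.mem_erase, Finset.mem_range, skip]
      split_ifs <;> omega
    · intro s _ t _ h
      exact (EM.skip_strictMono c).injective h
    · intro b hb
      simp only [Finset.mem_erase, Finset.mem_range] at hb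
      refine ⟨if b < c then b else b - 1, ?_, ?_⟩
      · rw [Finset.mem_range]; split_ifs <;> omega
      · simp only [skip]; split_ifs <;> omega
    · intros; rfl
  have hQc : Q c = 0 := EM.Phi_zero x (T c) (T jv) hTcj
  have hL3 : ∑ y ∈ (Finset.range m).erase c, g y = ∑ y ∈ Finset.range m, g y := by
    apply Finset.sum_erase
    simp only [g, hQc, zero_mul]
  rw [hL, hL2, hL3, ← Finset.add_sum_erase _ _ (Finset.mem_range.2 hjv)]
  have hgj : g jv = ∑ l ∈ (Finset.range m).erase jv, A l * Q jv := by
    simp only [g, if_true]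
    rw [← Finset.sum_mul, mul_comm]
  rw [hgj, ← Finset.sum_add_distrib]
  refine Finset.sum_congr rfl fun l hl => ?_
  simp only [g, if_neg (Finset.ne_of_mem_erase hl)]
  ring
end

section
/- For m marked vertices and a fixed removed column c, the m−1 spanning forest identities L_{m,c}(1), ..., L_{m,c}(m−1) (one for each column expansion index) sum to an identity whose left-hand side is (m−1)·Φ_{(1,1,...,1)}·Φ_{(1,2,...,m)} and whose right-hand side contains exactly one copy of each permissible AB monomial (i.e., each non-forbidden pair (A,B) with A an (m−1)-part partition and B a 2-part partition of the marked vertices such that the two vertices paired in A lie in different parts of B). -/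
open Finset

section Alg
variable {V : Type*} [Fintype V] [DecidableEq V] {R : Type*} [CommRing R]

/-- Replace the rows indexed by `W` by the rows of the identity matrix. -/
def Lw (W : Finset V) (A : Matrix V V R) : Matrix V V R :=
  fun v => if v ∈ W then Pi.single v 1 else A v

lemma det_zero_of_mulVec (A : Matrix V V R) (z : V → R) (hz : A.mulVec z = 0) (v : V)
    (hv : z v = 1) : A.det = 0 := by
  have h : (A.adjugate * A).mulVec z = 0 := by
    rw [← Matrix.mulVec_mulVec, hz, Matrix.mulVec_zero]
  rw [Matrix.adjugate_mul, Matrix.smul_mulVec, Matrix.one_mulVec] at h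
  have := congrFun h v
  simpa [hv] using this

lemma det_updateRow_eq (A : Matrix V V R) (j : V) (b : V → R) :
    (A.updateRow j b).det = ∑ v, b v * A.adjugate v j := by
  rw [← Matrix.cramer_transpose_apply, Matrix.cramer_eq_adjugate_mulVec,
    ← Matrix.adjugate_transpose, Matrix.mulVec_transpose]
  rfl

lemma lemJ (G : Matrix V V R) (M : Finset V) (j : V) (hj : j ∈ M) :
    ∑ i ∈ M, G.adjugate j i * ((Lw M G).updateRow j (G i)).det = G.det * (Lw M G).det := by
  have h1 : G.adjugate * G * (Lw M G).adjugate = G.det • (Lw M G).adjugate := by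
    rw [Matrix.adjugate_mul, Matrix.smul_mul, Matrix.one_mul]
  have h2 := congrFun (congrFun h1 j) j
  rw [Matrix.mul_assoc, Matrix.mul_apply, Matrix.smul_apply, smul_eq_mul] at h2
  have h3 : (Lw M G).adjugate j j = (Lw M G).det := by
    rw [Matrix.adjugate_apply]
    congr 1
    ext a b
    by_cases h : a = j
    · subst h; simp [Lw, hj]
    · simp [Matrix.updateRow_ne h]
  rw [h3] at h2
  rw [← h2]
  rw [← Finset.sum_subset (Finset.subset_univ M)]
  · refine Finset.sum_congr rfl fun i _ => ?_
    rw [det_updateRow_eq, Matrix.mul_apply]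
  · intro i _ hi
    have h4 : (Lw M G * (Lw M G).adjugate) i j = 0 := by
      rw [Matrix.mul_adjugate]
      have : i ≠ j := fun h => hi (h ▸ hj)
      simp [this]
    have h5 : (G * (Lw M G).adjugate) i j = (Lw M G * (Lw M G).adjugate) i j := by
      rw [Matrix.mul_apply, Matrix.mul_apply]
      refine Finset.sum_congr rfl fun k _ => ?_
      simp [Lw, hi]
    rw [h5, h4, mul_zero]

/-- entries of the (scaled) response matrix -/
def Kp (L : Matrix V V R) (M : Finset V) (i j : V) : R := ((Lw M L).updateRow j (L i)).det

lemma adj_const (L : Matrix V V R) (h0 : ∀ v, ∑ u, L v u = 0) (r c : V) :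
    (L.updateRow r (Pi.single c 1)).det = (L.updateRow r (Pi.single r 1)).det := by
  have h : (L.updateRow r (Pi.single c 1 - Pi.single r 1)).det = 0 := by
    apply det_zero_of_mulVec _ (fun _ => 1) _ r rfl
    ext v
    by_cases hv : v = r
    · subst hv
      simp [Matrix.mulVec, dotProduct]
    · simp [Matrix.mulVec, dotProduct, Matrix.updateRow_ne hv, h0]
  rw [sub_eq_add_neg, Matrix.det_updateRow_add] at h
  have h2 := Matrix.det_updateRow_smul L r (-1) (Pi.single r (1:R))
  rw [neg_one_smul] at h2
  rw [h2] at h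
  linear_combination h

lemma Lw_single (L : Matrix V V R) (r : V) : L.updateRow r (Pi.single r 1) = Lw {r} L := by
  ext a b
  by_cases h : a = r
  · subst h; simp [Lw]
  · simp [Lw, h]

/-- column expansion identity -/
lemma expansion (L : Matrix V V R) (h0 : ∀ v, ∑ u, L v u = 0) (M : Finset V) (r c t : V)
    (hr : r ∈ M) (hc : c ∈ M) (ht : t ∈ M) (htc : t ≠ c) :
    ∑ s ∈ M.erase r, ((L.updateRow r (Pi.single c 1)).updateRow s (Pi.single t 1)).det
      * Kp L M s t = (Lw {r} L).det * (Lw M L).det := by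
  have h := lemJ (L.updateRow r (Pi.single c 1)) M t ht
  have hL : Lw M (L.updateRow r (Pi.single c 1)) = Lw M L := by
    ext a b
    by_cases ha : a ∈ M
    · simp [Lw, ha]
    · have : a ≠ r := fun h => ha (h ▸ hr)
      simp [Lw, ha, Matrix.updateRow_ne this]
  rw [hL, adj_const L h0, Lw_single] at h
  rw [← h, ← Finset.add_sum_erase _ _ hr]
  have hz : ((Lw M L).updateRow t ((L.updateRow r (Pi.single c 1)) r)).det = 0 := by
    apply Matrix.det_zero_of_row_eq htc
    simp only [Matrix.updateRow_self, Matrix.updateRow_ne htc.symm]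
    ext b
    simp [Lw, hc]
  rw [hz, mul_zero, zero_add]
  refine Finset.sum_congr rfl fun s hs => ?_
  have hs := Finset.ne_of_mem_erase hs
  rw [Matrix.adjugate_apply, Kp, Matrix.updateRow_ne hs]

lemma Kp_row_sum (L : Matrix V V R) (h0 : ∀ v, ∑ u, L v u = 0) (M : Finset V) (i : V) :
    ∑ j ∈ M, Kp L M i j = 0 := by
  have h1 : (Lw M L).mulVec (fun _ => 1) = fun v => if v ∈ M then 1 else 0 := by
    ext v
    by_cases h : v ∈ M
    · simp [Lw, h, Matrix.mulVec, dotProduct]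
    · simp [Lw, h, Matrix.mulVec, dotProduct, h0]
  have h2 : (Lw M L).adjugate.mulVec (fun v => if v ∈ M then (1:R) else 0)
      = fun _ => (Lw M L).det := by
    rw [← h1, Matrix.mulVec_mulVec, Matrix.adjugate_mul, Matrix.smul_mulVec, Matrix.one_mulVec]
    ext; simp
  simp only [Kp, det_updateRow_eq]
  rw [Finset.sum_comm]
  have h3 : ∀ v, ∑ j ∈ M, L i v * (Lw M L).adjugate v j = L i v * (Lw M L).det := by
    intro v
    rw [← Finset.mul_sum]
    have := congrFun h2 v
    simp only [Matrix.mulVec, dotProduct, mul_ite, mul_one, mul_zero, Finset.sum_ite_mem,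
      Finset.univ_inter] at this
    rw [this]
  simp only [h3]
  rw [← Finset.sum_mul, h0, zero_mul]


/-- determinant with rows `p`, `q`, `r` replaced -/
def f3 (L : Matrix V V R) (p q r : V) (x y z : V → R) : R :=
  (((L.updateRow p x).updateRow q y).updateRow r z).det

lemma f3_add (L : Matrix V V R) (p q r : V) (x y z z' : V → R) :
    f3 L p q r x y (z + z') = f3 L p q r x y z + f3 L p q r x y z' :=
  Matrix.det_updateRow_add _ _ _ _

lemma f3_sub (L : Matrix V V R) (p q r : V) (x y z z' : V → R) :
    f3 L p q r x y (z - z') = f3 L p q r x y z - f3 L p q r x y z' := by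
  have := f3_add L p q r x y (z - z') z'
  rw [sub_add_cancel] at this
  rw [this]; ring

lemma det_swap_rows (A B : Matrix V V R) (p r : V) (hpr : p ≠ r)
    (h : ∀ v, B v = A (Equiv.swap p r v)) : B.det = - A.det := by
  have : B = A.submatrix (Equiv.swap p r) id := by
    ext a b; simp [h]
  rw [this, Matrix.det_permute, Equiv.Perm.sign_swap hpr]
  simp

lemma f3_swap13 (L : Matrix V V R) (p q r : V) (hpq : p ≠ q) (hpr : p ≠ r) (hqr : q ≠ r)
    (x y z : V → R) : f3 L p q r z y x = - f3 L p q r x y z := by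
  apply det_swap_rows _ _ p r hpr
  intro v
  by_cases h1 : v = p
  · subst h1; ext; simp [Matrix.updateRow_apply, hpq, hpr]
  by_cases h2 : v = q
  · subst h2; ext; simp [Matrix.updateRow_apply, hqr, Equiv.swap_apply_of_ne_of_ne hpq.symm hqr]
  by_cases h3 : v = r
  · subst h3; ext; simp [Matrix.updateRow_apply, hpq, hpr]
  ext; simp [Matrix.updateRow_apply, h1, h2, h3, Equiv.swap_apply_of_ne_of_ne h1 h3]

lemma f3_swap23 (L : Matrix V V R) (p q r : V) (hpq : p ≠ q) (hpr : p ≠ r) (hqr : q ≠ r)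
    (x y z : V → R) : f3 L p q r x z y = - f3 L p q r x y z := by
  apply det_swap_rows _ _ q r hqr
  intro v
  by_cases h1 : v = p
  · subst h1; ext; simp [Matrix.updateRow_apply, hpq, hpr, Equiv.swap_apply_of_ne_of_ne hpq hpr]
  by_cases h2 : v = q
  · subst h2; ext; simp [Matrix.updateRow_apply, hqr]
  by_cases h3 : v = r
  · subst h3; ext; simp [Matrix.updateRow_apply, hqr]
  ext; simp [Matrix.updateRow_apply, h1, h2, h3, Equiv.swap_apply_of_ne_of_ne h2 h3]

lemma f3_kill (L : Matrix V V R) (h0 : ∀ v, ∑ u, L v u = 0) (p q r : V) (x y z : V → R)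
    (hx : ∑ u, x u = 0) (hy : ∑ u, y u = 0) (hz : ∑ u, z u = 0) : f3 L p q r x y z = 0 := by
  apply det_zero_of_mulVec _ (fun _ => 1) _ r rfl
  ext v
  simp only [Matrix.mulVec, dotProduct, mul_one, Pi.zero_apply, Matrix.updateRow_apply]
  split_ifs <;> simp [*]

lemma f3_sum (L : Matrix V V R) (p q r : V) (x y : V → R) {ι : Type*} (S : Finset ι)
    (z : ι → V → R) :
    f3 L p q r x y (∑ i ∈ S, z i) = ∑ i ∈ S, f3 L p q r x y (z i) := by
  classical
  induction S using Finset.induction_on with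
  | empty =>
    simp only [Finset.sum_empty]
    have := f3_sub L p q r x y 0 0
    rwa [sub_self, sub_self] at this
  | insert a S ha ih => rw [Finset.sum_insert ha, Finset.sum_insert ha, f3_add, ih]

lemma f3_row (L : Matrix V V R) (h1 : ∀ u, ∑ v, L v u = 0) (p q r : V) (hpq : p ≠ q)
    (hpr : p ≠ r) (hqr : q ≠ r) (x y : V → R) :
    f3 L p q r x y (L r) = - f3 L p q r x y (L p) - f3 L p q r x y (L q) := by
  have h : ∑ v, f3 L p q r x y (L v) = 0 := by
    refine (f3_sum L p q r x y univ (fun v u => L v u)).symm.trans ?_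
    have : (∑ v, fun u => L v u) = 0 := by ext u; simp [h1]
    rw [this]
    have := f3_sub L p q r x y 0 0
    rwa [sub_self, sub_self] at this
  rw [← Finset.sum_subset (Finset.subset_univ {p, q, r})] at h
  · rw [Finset.sum_insert (by simp [hpq, hpr]), Finset.sum_pair hqr] at h
    linear_combination h
  · intro v _ hv
    simp only [Finset.mem_insert, Finset.mem_singleton, not_or] at hv
    apply Matrix.det_zero_of_row_eq hv.2.2
    ext b
    simp [Matrix.updateRow_apply, hv.1, hv.2.1, hv.2.2]

/-- Green function entries with root `r` -/
def gg (L : Matrix V V R) (r p q : V) : R :=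
  if p = r then 0 else ((L.updateRow r (Pi.single r 1)).updateRow p (Pi.single q 1)).det

lemma gg_right (L : Matrix V V R) (r p : V) : gg L r p r = 0 := by
  unfold gg
  split_ifs with h
  · rfl
  · apply Matrix.det_zero_of_row_eq h
    ext b
    simp [Matrix.updateRow_apply, Ne.symm h]

lemma resist (L : Matrix V V R) (h0 : ∀ v, ∑ u, L v u = 0) (h1 : ∀ u, ∑ v, L v u = 0)
    (r p q : V) (hpq : p ≠ q) :
    (Lw {p, q} L).det = (gg L r p p - gg L r p q) + (gg L r q q - gg L r q p) := by
  by_cases hp : p = r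
  · subst hp
    rw [gg_right, gg_right]
    simp only [gg, if_neg hpq.symm, if_true, sub_zero, zero_add]
    congr 1
    ext a b
    simp only [Lw, Matrix.updateRow_apply]
    by_cases ha : a = q
    · subst ha; simp
    by_cases hb : a = p
    · subst hb; simp [ha]
    simp [ha, hb]
  by_cases hq : q = r
  · subst hq
    rw [gg_right, gg_right]
    simp only [gg, if_neg hpq, if_true, sub_zero, add_zero]
    congr 1
    ext a b
    simp only [Lw, Matrix.updateRow_apply]
    by_cases ha : a = p
    · subst ha; simp
    by_cases hb : a = q
    · subst hb; simp [ha]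
    simp [ha, hb]
  have eB : (Lw {p, q} L).det = f3 L p q r (Pi.single p 1) (Pi.single q 1) (L r) := by
    unfold f3
    congr 1
    ext a b
    simp only [Lw, Matrix.updateRow_apply, Finset.mem_insert, Finset.mem_singleton]
    by_cases ha : a = p
    · subst ha; simp [hp, hpq]
    by_cases hb : a = q
    · subst hb; simp [hq]
    by_cases hc : a = r
    · subst hc; simp [ha, hb]
    simp [ha, hb, hc]
  have eg1 : ∀ t, gg L r p t = f3 L p q r (Pi.single t 1) (L q) (Pi.single r 1) := by
    intro t
    rw [gg, if_neg hp]
    unfold f3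
    congr 1
    ext a b
    simp only [Matrix.updateRow_apply]
    by_cases ha : a = p
    · subst ha; simp [hp, hpq]
    by_cases hb : a = q
    · subst hb; simp [hq, ha]
    by_cases hc : a = r
    · subst hc; simp [ha]
    simp [ha, hb, hc]
  have eg2 : ∀ t, gg L r q t = f3 L p q r (L p) (Pi.single t 1) (Pi.single r 1) := by
    intro t
    rw [gg, if_neg hq]
    unfold f3
    congr 1
    ext a b
    simp only [Matrix.updateRow_apply]
    by_cases ha : a = p
    · subst ha; simp [hp, hpq]
    by_cases hb : a = q
    · subst hb; simp [hq]
    by_cases hc : a = r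
    · subst hc; simp [hb]
    simp [ha, hb, hc]
  rw [eB, f3_row L h1 p q r hpq hp hq, eg1, eg1, eg2, eg2]
  have s1 := f3_swap13 L p q r hpq hp hq (L p) (Pi.single q 1) (Pi.single p 1)
  have s2 := f3_swap23 L p q r hpq hp hq (Pi.single p 1) (L q) (Pi.single q 1)
  have k1 := f3_kill L h0 p q r (L p) (Pi.single q 1 - Pi.single p 1)
    (Pi.single p 1 - Pi.single r 1) (h0 p) (by simp) (by simp)
  have k2 := f3_kill L h0 p q r (Pi.single p 1 - Pi.single q 1) (L q)
    (Pi.single q 1 - Pi.single r 1) (by simp) (h0 q) (by simp)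
  have a2 : ∀ x y y' z, f3 L p q r x (y - y') z = f3 L p q r x y z - f3 L p q r x y' z := by
    intro x y y' z
    rw [f3_swap23 L p q r hpq hp hq x z, f3_sub, f3_swap23 L p q r hpq hp hq x z y,
      f3_swap23 L p q r hpq hp hq x z y']
    ring
  have a1 : ∀ x x' y z, f3 L p q r (x - x') y z = f3 L p q r x y z - f3 L p q r x' y z := by
    intro x x' y z
    rw [f3_swap13 L p q r hpq hp hq z y, f3_sub, f3_swap13 L p q r hpq hp hq z y x,
      f3_swap13 L p q r hpq hp hq z y x']
    ring
  have z1 : f3 L p q r (L p) (Pi.single p 1) (Pi.single p 1) = 0 := by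
    apply Matrix.det_zero_of_row_eq hq
    ext b
    simp [Matrix.updateRow_apply, hq]
  have z2 : f3 L p q r (Pi.single q 1) (L q) (Pi.single q 1) = 0 := by
    apply Matrix.det_zero_of_row_eq hp
    ext b
    simp [Matrix.updateRow_apply, hp, hpq]
  rw [f3_sub, a2, a2, z1] at k1
  rw [f3_sub, a1, a1, z2] at k2
  linear_combination (-1) * s1 - s2 + k1 + k2

lemma allNF_alg (L : Matrix V V R) (h0 : ∀ v, ∑ u, L v u = 0) 
    (M : Finset V) (r : V) (hr : r ∈ M) :
    ∑ p ∈ M, ∑ q ∈ M, -(Kp L M p q) * (gg L r p p - gg L r p q)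
      = ((#M - 1 : ℕ) : R) * ((Lw {r} L).det * (Lw M L).det) := by
  have e1 : ∀ p ∈ M, ∑ q ∈ M, -(Kp L M p q) * (gg L r p p - gg L r p q)
      = ∑ q ∈ M, gg L r p q * Kp L M p q := by
    intro p _
    have := Kp_row_sum L h0 M p
    calc _ = ∑ q ∈ M, (gg L r p q * Kp L M p q - gg L r p p * Kp L M p q) :=
          Finset.sum_congr rfl fun q _ => by ring
      _ = _ := by rw [Finset.sum_sub_distrib, ← Finset.mul_sum, this]; simp
  rw [Finset.sum_congr rfl e1, Finset.sum_comm, ← Finset.add_sum_erase _ _ hr]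
  simp only [gg_right, zero_mul, Finset.sum_const_zero, zero_add]
  rw [← Finset.card_erase_of_mem hr, ← nsmul_eq_mul, ← Finset.sum_const]
  refine Finset.sum_congr rfl fun t ht => ?_
  rw [Finset.mem_erase] at ht
  rw [← expansion L h0 M r r t hr hr ht.2 ht.1, ← Finset.add_sum_erase _ _ hr]
  simp only [gg, if_true, zero_mul, zero_add]
  refine Finset.sum_congr rfl fun s hs => ?_
  rw [if_neg (Finset.ne_of_mem_erase hs)]

end Alg
section MTT
variable {V : Type*} [Fintype V] [DecidableEq V] {R : Type*} [CommRing R]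

/-- Maps that fix `W` pointwise. -/
def choices (W : Finset V) : Finset (V → V) :=
  Fintype.piFinset fun i => if i ∈ W then {i} else univ

lemma mem_choices {W : Finset V} {f : V → V} : f ∈ choices W ↔ ∀ w ∈ W, f w = w := by
  unfold choices
  rw [Fintype.mem_piFinset]
  refine forall_congr' fun i => ?_
  by_cases h : i ∈ W <;> simp [h]

lemma det_expand (W : Finset V) (y : V → V → R) (a : V → V → R) (L : Matrix V V R)
    (hL : ∀ v, L v = ∑ u, a v u • (Pi.single v (1 : R) - Pi.single u 1)) :
    Matrix.det (fun v => if v ∈ W then y v else L v) =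
      ∑ f ∈ choices W, (∏ v ∈ Wᶜ, a v (f v)) *
        Matrix.det (fun v => if v ∈ W then y v else Pi.single v (1 : R) - Pi.single (f v) 1) := by
  have key := (Matrix.detRowAlternating (n := V) (R := R)).toMultilinearMap.map_sum_finset
    (fun i j => if i ∈ W then y i else a i j • (Pi.single i (1 : R) - Pi.single j 1))
    (fun i => if i ∈ W then {i} else univ)
  refine Eq.trans ?_ (key.trans ?_)
  · change Matrix.det _ = Matrix.det _
    congr 1
    funext v
    by_cases h : v ∈ W
    · simp [h]
    · simp [h, hL]
  · refine Finset.sum_congr rfl fun f _ => ?_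
    have := (Matrix.detRowAlternating (n := V) (R := R)).toMultilinearMap.map_smul_univ
      (fun i => if i ∈ W then 1 else a i (f i))
      (fun v => if v ∈ W then y v else Pi.single v (1 : R) - Pi.single (f v) 1)
    refine Eq.trans ?_ (this.trans ?_)
    · congr 1
      funext v
      by_cases h : v ∈ W <;> simp [h]
    · rw [smul_eq_mul]
      congr 1
      rw [Finset.prod_ite]
      simp only [Finset.prod_const_one, one_mul]
      refine Finset.prod_congr ?_ fun _ _ => rfl
      ext; simp

/-- The map `f` flows into `W`. -/
def Acyc (W : Finset V) (f : V → V) : Prop := ∃ d : V → ℕ, ∀ v, v ∉ W → d (f v) < d v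

/-- Matrix of a choice function. -/
def Pm (R : Type*) [CommRing R] (W : Finset V) (f : V → V) : Matrix V V R :=
  fun v => if v ∈ W then Pi.single v (1 : R) else Pi.single v (1 : R) - Pi.single (f v) 1

lemma det_Pm_acyc (W : Finset V) (f : V → V) (h : Acyc W f) : (Pm R W f).det = 1 := by
  obtain ⟨d, hd⟩ := h
  have bt : (Pm R W f).BlockTriangular (fun v => OrderDual.toDual (d v)) := by
    intro i j hij
    have hij' : d i < d j := hij
    have hne : j ≠ i := by rintro rfl; exact lt_irrefl _ hij'
    by_cases h : i ∈ W
    · simp [Pm, h, hne]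
    · have : j ≠ f i := by
        rintro rfl
        have := hd i h
        omega
      simp [Pm, h, hne, this]
  rw [bt.det]
  refine Finset.prod_eq_one fun k _ => ?_
  have : (Pm R W f).toSquareBlock (fun v => OrderDual.toDual (d v)) k = 1 := by
    ext i j
    have hij : d i.1 = d j.1 := by
      have := i.2.trans j.2.symm
      exact this
    rw [Matrix.toSquareBlock_def, Matrix.of_apply, Matrix.one_apply]
    by_cases h : i.1 ∈ W
    · by_cases e : i = j
      · subst e; simp [Pm, h]
      · have : j.1 ≠ i.1 := fun h => e (Subtype.ext h.symm)
        simp [Pm, h, this, e]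
    · have hf : j.1 ≠ f i.1 := by
        intro hh
        have := hd _ h
        rw [← hh] at this; omega
      by_cases e : i = j
      · subst e; simp [Pm, h, hf]
      · have : j.1 ≠ i.1 := fun h => e (Subtype.ext h.symm)
        simp [Pm, h, this, e, hf]
  rw [this, Matrix.det_one]

lemma det_zero_of_mulVec' (A : Matrix V V R) (z : V → R) (hz : A.mulVec z = 0) (v : V)
    (hv : z v = 1) : A.det = 0 := by
  have h : (A.adjugate * A).mulVec z = 0 := by
    rw [← Matrix.mulVec_mulVec, hz, Matrix.mulVec_zero]
  rw [Matrix.adjugate_mul, Matrix.smul_mulVec, Matrix.one_mulVec] at h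
  have := congrFun h v
  simpa [hv] using this

lemma acyc_of_reach (W : Finset V) (f : V → V) (h : ∀ v, ∃ k, f^[k] v ∈ W) : Acyc W f := by
  classical
  refine ⟨fun v => Nat.find (h v), fun v hv => ?_⟩
  have h1 := Nat.find_spec (h v)
  have h2 : Nat.find (h v) ≠ 0 := by
    intro h0
    rw [h0] at h1
    exact hv h1
  obtain ⟨k, hk⟩ := Nat.exists_eq_succ_of_ne_zero h2
  rw [hk, Function.iterate_succ_apply] at h1
  have := Nat.find_min' (h (f v)) h1
  change Nat.find (h (f v)) < Nat.find (h v)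
  omega

lemma det_Pm_cyc (W : Finset V) (f : V → V) (h : ¬ Acyc W f) : (Pm R W f).det = 0 := by
  classical
  have h1 : ∃ v, ∀ k, f^[k] v ∉ W := by
    by_contra hc
    push Not at hc
    exact h (acyc_of_reach W f hc)
  obtain ⟨v, hv⟩ := h1
  apply det_zero_of_mulVec' _ (fun u => if ∀ k, f^[k] u ∉ W then 1 else 0) _ v (if_pos hv)
  ext u
  by_cases hu : u ∈ W
  · have : ¬ ∀ k, f^[k] u ∉ W := fun hh => hh 0 hu
    simp only [Matrix.mulVec, Pm, hu, if_true, single_dotProduct, if_neg this]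
    simp
  · have : (∀ k, f^[k] u ∉ W) ↔ ∀ k, f^[k] (f u) ∉ W := by
      constructor
      · intro hh k
        have := hh (k + 1)
        rwa [Function.iterate_succ_apply] at this
      · intro hh k
        cases k with
        | zero => exact hu
        | succ k => rw [Function.iterate_succ_apply]; exact hh k
    simp only [Matrix.mulVec, Pm, hu, if_false, sub_dotProduct, single_dotProduct, this]
    simp

/-- Root map of an acyclic choice function. -/
lemma exists_root (W : Finset V) (f : V → V) (hf : f ∈ choices W) (h : Acyc W f) :
    ∃ ρ : V → V, (∀ v, ρ v ∈ W) ∧ (∀ w ∈ W, ρ w = w) ∧ (∀ v, ρ (f v) = ρ v) ∧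
      ∃ K, ∀ v, ρ v = f^[K] v := by
  obtain ⟨d, hd⟩ := h
  rw [mem_choices] at hf
  have hfix : ∀ w ∈ W, ∀ k, f^[k] w = w := by
    intro w hw k
    induction k with
    | zero => rfl
    | succ k ih => rw [Function.iterate_succ_apply, hf w hw, ih]
  have hin : ∀ k v, d v ≤ k → f^[k] v ∈ W := by
    intro k
    induction k with
    | zero =>
      intro v hv
      by_contra hc
      have := hd v hc
      omega
    | succ k ih =>
      intro v hv
      by_cases hW : v ∈ W
      · rw [hfix v hW]; exact hW
      · rw [Function.iterate_succ_apply]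
        apply ih
        have := hd v hW
        omega
  set K := univ.sup d with hK
  have hle : ∀ v, d v ≤ K := fun v => Finset.le_sup (f := d) (mem_univ v)
  refine ⟨f^[K], fun v => hin K v (hle v), fun w hw => hfix w hw K, fun v => ?_, K, fun _ => rfl⟩
  rw [← Function.iterate_succ_apply, Function.iterate_succ_apply']
  exact hf _ (hin K v (hle v))

/-- Edge set of a choice function. -/
def edgesOf (W : Finset V) (f : V → V) : Finset (Sym2 V) := Wᶜ.image fun v => s(v, f v)

/-- graph of an edge set -/
abbrev gr (F : Finset (Sym2 V)) : SimpleGraph V := SimpleGraph.fromEdgeSet (F : Set (Sym2 V))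

/-- Spanning forests with exactly one vertex of `W` in each tree. -/
def Rooted (W : Finset V) (F : Finset (Sym2 V)) : Prop :=
  (gr F).IsAcyclic ∧ (∀ i ∈ W, ∀ j ∈ W, (gr F).Reachable i j → i = j) ∧
    ∀ v, ∃ w ∈ W, (gr F).Reachable v w

lemma gr_adj_edgesOf {W : Finset V} {f : V → V} {u v : V} :
    (gr (edgesOf W f)).Adj u v ↔ u ≠ v ∧ ((u ∉ W ∧ f u = v) ∨ (v ∉ W ∧ f v = u)) := by
  rw [SimpleGraph.fromEdgeSet_adj]
  simp only [edgesOf, coe_image, Set.mem_image, mem_coe, mem_compl, Sym2.eq_iff]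
  constructor
  · rintro ⟨⟨w, hw, ⟨rfl, rfl⟩ | ⟨rfl, rfl⟩⟩, hne⟩
    · exact ⟨hne, Or.inl ⟨hw, rfl⟩⟩
    · exact ⟨hne, Or.inr ⟨hw, rfl⟩⟩
  · rintro ⟨hne, ⟨hw, rfl⟩ | ⟨hw, rfl⟩⟩
    · exact ⟨⟨u, hw, Or.inl ⟨rfl, rfl⟩⟩, hne⟩
    · exact ⟨⟨v, hw, Or.inr ⟨rfl, rfl⟩⟩, hne⟩

lemma reach_f {W : Finset V} {f : V → V} (hf : f ∈ choices W) (u : V) :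
    (gr (edgesOf W f)).Reachable u (f u) := by
  by_cases h : f u = u
  · rw [h]
  · refine SimpleGraph.Adj.reachable (gr_adj_edgesOf.2 ⟨Ne.symm h, Or.inl ⟨fun hu => h ?_, rfl⟩⟩)
    exact mem_choices.1 hf u hu

lemma reach_iter {W : Finset V} {f : V → V} (hf : f ∈ choices W) (k : ℕ) (u : V) :
    (gr (edgesOf W f)).Reachable u (f^[k] u) := by
  induction k with
  | zero => exact SimpleGraph.Reachable.refl _
  | succ k ih =>
    rw [Function.iterate_succ_apply']
    exact ih.trans (reach_f hf _)

lemma root_reach {W : Finset V} {f : V → V} {ρ : V → V} (hρ : ∀ v, ρ (f v) = ρ v) {u v : V}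
    (h : (gr (edgesOf W f)).Reachable u v) : ρ u = ρ v := by
  obtain ⟨p⟩ := h
  induction p with
  | nil => rfl
  | cons hadj _ ih =>
    rw [← ih]
    rcases (gr_adj_edgesOf.1 hadj).2 with ⟨_, h⟩ | ⟨_, h⟩
    · rw [← h, hρ]
    · rw [← h, hρ]

lemma edgesOf_acyclic {W : Finset V} {f : V → V} (h : Acyc W f) :
    (gr (edgesOf W f)).IsAcyclic := by
  obtain ⟨d, hd⟩ := h
  intro v c hc
  obtain ⟨w, hw, hmax⟩ := Finset.exists_max_image c.support.toFinset d
    ⟨v, by simp⟩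
  rw [List.mem_toFinset] at hw
  have hc' := hc.rotate hw
  have hsupp : ∀ u ∈ (c.rotate w hw).support, d u ≤ d w := by
    intro u hu
    apply hmax
    rw [List.mem_toFinset]
    simpa using hu
  have key : ∀ u, (gr (edgesOf W f)).Adj w u → d u ≤ d w → u = f w := by
    intro u hu hle
    rcases (gr_adj_edgesOf.1 hu).2 with ⟨_, h⟩ | ⟨h1, h⟩
    · exact h.symm
    · have := hd u h1
      rw [h] at this; omega
  apply hc'.snd_ne_penultimate
  have nn := hc'.not_nil
  rw [key _ (SimpleGraph.Walk.adj_snd nn) (hsupp _ (SimpleGraph.Walk.getVert_mem_support ..)),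
    key _ (SimpleGraph.Walk.adj_penultimate nn).symm
      (hsupp _ (SimpleGraph.Walk.getVert_mem_support ..))]

lemma edgesOf_rooted {W : Finset V} {f : V → V} (hf : f ∈ choices W) (h : Acyc W f) :
    Rooted W (edgesOf W f) := by
  refine ⟨edgesOf_acyclic h, ?_, ?_⟩
  all_goals obtain ⟨ρ, h1, h2, h3, K, hK⟩ := exists_root W f hf h
  · intro i hi j hj hij
    have := root_reach h3 hij
    rwa [h2 i hi, h2 j hj] at this
  · intro v
    refine ⟨ρ v, h1 v, ?_⟩
    rw [hK]
    exact reach_iter hf K v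

lemma edgesOf_inj {W : Finset V} {f g : V → V} (hf : f ∈ choices W) (hg : g ∈ choices W)
    (h : Acyc W f) (e : edgesOf W f = edgesOf W g) : f = g := by
  obtain ⟨d, hd⟩ := h
  have : ∀ k v, d v ≤ k → f v = g v := by
    intro k
    induction k using Nat.strong_induction_on with
    | _ k ih =>
      intro v hv
      by_cases hW : v ∈ W
      · rw [mem_choices.1 hf v hW, mem_choices.1 hg v hW]
      · have hlt := hd v hW
        have hmem : s(v, f v) ∈ edgesOf W g := by
          rw [← e]
          exact Finset.mem_image.2 ⟨v, by simpa using hW, rfl⟩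
        obtain ⟨w, hw, hws⟩ := Finset.mem_image.1 hmem
        rw [mem_compl] at hw
        rcases Sym2.eq_iff.1 hws with ⟨rfl, h2⟩ | ⟨h1, h2⟩
        · exact h2.symm
        · exfalso
          have h3 := ih (d w) (by rw [h1]; omega) w le_rfl
          have := hd w hw
          rw [h3, h2, h1] at this
          omega
  exact funext fun v => this (d v) v le_rfl

lemma edge_injOn {W : Finset V} {f : V → V} (h : Acyc W f) :
    Set.InjOn (fun v => s(v, f v)) (Wᶜ : Finset V) := by
  obtain ⟨d, hd⟩ := h
  intro u hu v hv huv
  simp only [coe_compl, Set.mem_compl_iff, mem_coe] at hu hv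
  rcases Sym2.eq_iff.1 huv with ⟨h1, _⟩ | ⟨h1, h2⟩
  · exact h1
  · have a := hd u hu
    have b := hd v hv
    rw [h2] at a
    rw [← h1] at b
    omega

lemma edgesOf_surj {W : Finset V} {F : Finset (Sym2 V)}
    (hF : (F : Set (Sym2 V)) ⊆ (⊤ : SimpleGraph V).edgeSet) (h : Rooted W F) :
    ∃ f ∈ choices W, Acyc W f ∧ edgesOf W f = F := by
  classical
  obtain ⟨hac, huniq, hex⟩ := h
  choose ρ hρW hρ using hex
  have hρu : ∀ u v, (gr F).Reachable u v → ρ u = ρ v := fun u v huv =>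
    huniq _ (hρW u) _ (hρW v) ((hρ u).symm.trans (huv.trans (hρ v)))
  have step : ∀ v, ∃ u, (v ∈ W → u = v) ∧ (v ∉ W → (gr F).Adj v u ∧
      (gr F).dist u (ρ u) < (gr F).dist v (ρ v)) := by
    intro v
    by_cases hv : v ∈ W
    · exact ⟨v, fun _ => rfl, fun h => absurd hv h⟩
    · obtain ⟨p, hp⟩ := (hρ v).exists_walk_length_eq_dist
      have hne : v ≠ ρ v := fun h => hv (h ▸ hρW v)
      have nn : ¬ p.Nil := SimpleGraph.Walk.not_nil_of_ne hne
      have hadj := SimpleGraph.Walk.adj_snd nn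
      refine ⟨p.snd, fun h => absurd h hv, fun _ => ⟨hadj, ?_⟩⟩
      rw [← hρu v p.snd hadj.reachable, ← hp]
      have h1 := SimpleGraph.dist_le p.tail
      have h2 := SimpleGraph.Walk.length_tail_add_one nn
      omega
  choose f hf1 hf2 using step
  have hfc : f ∈ choices W := mem_choices.2 hf1
  have hfa : Acyc W f := ⟨fun v => (gr F).dist v (ρ v), fun v hv => (hf2 v hv).2⟩
  have hsub : edgesOf W f ⊆ F := by
    intro e he
    obtain ⟨v, hv, rfl⟩ := Finset.mem_image.1 he
    have := (hf2 v (by simpa using hv)).1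
    exact_mod_cast ((SimpleGraph.fromEdgeSet_adj _).1 this).1
  refine ⟨f, hfc, hfa, Finset.Subset.antisymm hsub ?_⟩
  intro e
  induction e using Sym2.ind with
  | _ u v =>
  intro he
  by_contra hne
  have huv : u ≠ v := by
    have := hF he
    simpa using this
  have hadj : (gr F).Adj u v := (SimpleGraph.fromEdgeSet_adj _).2 ⟨he, huv⟩
  have hbr := SimpleGraph.isAcyclic_iff_forall_adj_isBridge.1 hac hadj
  rw [SimpleGraph.isBridge_iff] at hbr
  obtain ⟨σ, s1, s2, s3, K, hK⟩ := exists_root W f hfc hfa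
  have hle : gr (edgesOf W f) ≤ (gr F) \ SimpleGraph.fromEdgeSet {s(u, v)} := by
    intro a b hab
    have hab' := (SimpleGraph.fromEdgeSet_adj _).1 hab
    rw [SimpleGraph.sdiff_adj]
    refine ⟨(SimpleGraph.fromEdgeSet_adj _).2 ⟨hsub hab'.1, hab'.2⟩, fun hc => ?_⟩
    have := ((SimpleGraph.fromEdgeSet_adj _).1 hc).1
    rw [Set.mem_singleton_iff] at this
    exact hne (this ▸ hab'.1)
  have hle' : gr (edgesOf W f) ≤ gr F := hle.trans sdiff_le
  have r1 : (gr (edgesOf W f)).Reachable u (σ u) := by rw [hK]; exact reach_iter hfc K u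
  have r2 : (gr (edgesOf W f)).Reachable v (σ v) := by rw [hK]; exact reach_iter hfc K v
  have r3 : σ u = σ v := huniq _ (s1 u) _ (s1 v)
    ((r1.mono hle').symm.trans (hadj.reachable.trans (r2.mono hle')))
  rw [← r3] at r2
  exact hbr ((r1.trans r2.symm).mono hle)

open Classical in
lemma sum_choices (W : Finset V) (x : Sym2 V → R) (Q : Finset (Sym2 V) → Prop) :
    ∑ f ∈ (choices W).filter (fun f => Acyc W f ∧ Q (edgesOf W f)), ∏ v ∈ Wᶜ, x s(v, f v) =
    ∑ F ∈ (⊤ : SimpleGraph V).edgeFinset.powerset.filter (fun F => Rooted W F ∧ Q F),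
      ∏ e ∈ F, x e := by
  refine Finset.sum_nbij (edgesOf W) ?_ ?_ ?_ ?_
  · intro f hf
    rw [Finset.mem_filter] at hf ⊢
    refine ⟨?_, edgesOf_rooted hf.1 hf.2.1, hf.2.2⟩
    rw [Finset.mem_powerset]
    intro e he
    obtain ⟨v, hv, rfl⟩ := Finset.mem_image.1 he
    obtain ⟨d, hd⟩ := hf.2.1
    have := hd v (by simpa using hv)
    rw [SimpleGraph.mem_edgeFinset, SimpleGraph.mem_edgeSet, SimpleGraph.top_adj]
    intro hh
    rw [← hh] at this
    omega
  · intro f hf g hg e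
    rw [Finset.mem_coe, Finset.mem_filter] at hf hg
    exact edgesOf_inj hf.1 hg.1 hf.2.1 e
  · intro F hF
    rw [Finset.mem_coe, Finset.mem_filter, Finset.mem_powerset] at hF
    obtain ⟨f, h1, h2, h3⟩ := edgesOf_surj (fun e he => SimpleGraph.mem_edgeFinset.1 (hF.1 he)) hF.2.1
    refine ⟨f, ?_, h3⟩
    rw [Finset.mem_coe, Finset.mem_filter, h3]
    exact ⟨h1, h2, hF.2.2⟩
  · intro f hf
    rw [Finset.mem_filter] at hf
    unfold edgesOf
    rw [Finset.prod_image (edge_injOn hf.2.1)]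

end MTT
section Glue
variable {V : Type*} [Fintype V] [DecidableEq V] {R : Type*} [CommRing R]

open Classical in
lemma mtt (W : Finset V) (x : Sym2 V → R) (L : Matrix V V R)
    (hL : ∀ v, L v = ∑ u, x s(v, u) • (Pi.single v (1 : R) - Pi.single u 1)) :
    (Lw W L).det = ∑ F ∈ (⊤ : SimpleGraph V).edgeFinset.powerset,
      if Rooted W F then ∏ e ∈ F, x e else 0 := by
  have h := det_expand W (fun v => Pi.single v 1) (fun v u => x s(v, u)) L hL
  have h2 := sum_choices W x (fun _ => True)
  simp only [and_true] at h2
  rw [← Finset.sum_filter, ← h2]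
  refine h.trans ?_
  rw [Finset.sum_filter]
  refine Finset.sum_congr rfl fun f _ => ?_
  change _ * (Pm R W f).det = _
  split_ifs with ha
  · rw [det_Pm_acyc W f ha, mul_one]
  · rw [det_Pm_cyc W f ha, mul_zero]

lemma acyc_update (W : Finset V) (f : V → V) (hf : f ∈ choices W) (p q : V) 
    (hq : q ∈ W) : Acyc (W.erase q) (Function.update f q p) ↔
      Acyc W f ∧ ¬ (gr (edgesOf W f)).Reachable p q := by
  constructor
  · rintro ⟨d, hd⟩
    have hd1 : ∀ v, v ∉ W → d (f v) < d v := by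
      intro v hv
      have hvq : v ≠ q := fun h => hv (h ▸ hq)
      have := hd v (fun h => hv (Finset.mem_of_mem_erase h))
      rwa [Function.update_of_ne hvq] at this
    refine ⟨⟨d, hd1⟩, fun hr => ?_⟩
    obtain ⟨ρ, h1, h2, h3, K, hK⟩ := exists_root W f hf ⟨d, hd1⟩
    have h4 := root_reach h3 hr
    rw [h2 q hq] at h4
    have h5 : ∀ k, d (f^[k] p) ≤ d p := by
      intro k
      induction k with
      | zero => exact le_rfl
      | succ k ih =>
        rw [Function.iterate_succ_apply']
        refine le_trans ?_ ih
        by_cases hW : f^[k] p ∈ W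
        · rw [mem_choices.1 hf _ hW]
        · exact (hd1 _ hW).le
    have h6 := h5 K
    rw [← hK, h4] at h6
    have h7 := hd q (by simp)
    rw [Function.update_self] at h7
    omega
  · rintro ⟨⟨d, hd⟩, hr⟩
    obtain ⟨ρ, h1, h2, h3, K, hK⟩ := exists_root W f hf ⟨d, hd⟩
    have h4 : ρ p ≠ q := by
      intro h
      apply hr
      rw [← h, hK]
      exact reach_iter hf K p
    refine ⟨fun v => if ρ v = q then d v + (d p + 1) else d v, fun v hv => ?_⟩
    by_cases hvq : v = q
    · subst hvq
      simp only [Function.update_self, if_neg h4, h2 v hq, if_true]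
      omega
    · have hvW : v ∉ W := fun h => hv (Finset.mem_erase.2 ⟨hvq, h⟩)
      simp only [Function.update_of_ne hvq, h3]
      have := hd v hvW
      split_ifs <;> omega

open Classical in
lemma neg_Kp (M : Finset V) (x : Sym2 V → R) (L : Matrix V V R)
    (hL : ∀ v, L v = ∑ u, x s(v, u) • (Pi.single v (1 : R) - Pi.single u 1)) (p q : V)
    (hp : p ∈ M) (hq : q ∈ M) (hpq : p ≠ q) :
    -(Kp L M p q) = ∑ F ∈ (⊤ : SimpleGraph V).edgeFinset.powerset,
      if Rooted (M.erase p) F ∧ (gr F).Reachable p q then ∏ e ∈ F, x e else 0 := by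
  have h := det_expand (M.erase p) (fun v => if v = q then Pi.single p 1 else Pi.single v 1)
    (fun v u => x s(v, u)) L hL
  have h2 := sum_choices (M.erase p) x (fun F => (gr F).Reachable p q)
  rw [← Finset.sum_filter]
  refine Eq.trans ?_ (h2.trans (Finset.sum_congr (by ext; simp only [Finset.mem_filter])
    fun _ _ => rfl))
  have h3 : -(Kp L M p q) = Matrix.det (fun v => if v ∈ M.erase p then
      (if v = q then Pi.single p 1 else Pi.single v 1) else L v) := by
    unfold Kp
    symm
    apply det_swap_rows _ _ p q hpq
    intro v
    ext b
    by_cases h1 : v = p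
    · subst h1; simp
    by_cases h2 : v = q
    · subst h2; simp [h1, hq, Matrix.updateRow_apply, hpq, Lw, hp]
    by_cases hM : v ∈ M <;>
    simp [h1, h2, Equiv.swap_apply_of_ne_of_ne h1 h2, Matrix.updateRow_apply, Lw, hM]
  rw [h3, h, Finset.sum_filter]
  refine Finset.sum_congr rfl fun f hf => ?_
  have hqW : q ∈ M.erase p := Finset.mem_erase.2 ⟨hpq.symm, hq⟩
  have h4 : Matrix.det (fun v => if v ∈ M.erase p then
      (if v = q then Pi.single p 1 else Pi.single v 1) else
        Pi.single v (1 : R) - Pi.single (f v) 1)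
      = (Pm R (M.erase p) f).det -
        (Pm R ((M.erase p).erase q) (Function.update f q p)).det := by
    have e1 : Matrix.det (fun v => if v ∈ M.erase p then
      (if v = q then Pi.single p 1 else Pi.single v 1) else
        Pi.single v (1 : R) - Pi.single (f v) 1)
        = ((Pm R (M.erase p) f).updateRow q (Pi.single p 1)).det := by
      congr 1
      ext v b
      by_cases hv : v = q
      · subst hv; simp [hqW, Matrix.updateRow_apply, -Finset.mem_erase]
      · simp [hv, Matrix.updateRow_apply, -Finset.mem_erase, Pm]
    have e2 : (Pm R (M.erase p) f).det
        = ((Pm R (M.erase p) f).updateRow q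
          ((Pi.single q 1 - Pi.single p 1) + Pi.single p 1)).det := by
      congr 1
      ext v b
      by_cases hv : v = q
      · subst hv; simp [hqW, Matrix.updateRow_apply, -Finset.mem_erase, Pm]
      · simp [hv, Matrix.updateRow_apply]
    have e3 : Pm R ((M.erase p).erase q) (Function.update f q p)
        = (Pm R (M.erase p) f).updateRow q (Pi.single q 1 - Pi.single p 1) := by
      ext v b
      by_cases hv : v = q
      · subst hv; simp [Matrix.updateRow_apply, Pm]
      · simp [hv, Matrix.updateRow_apply, Pm]
    rw [e1, e2, e3, Matrix.det_updateRow_add]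
    ring
  rw [h4]
  have h5 := acyc_update (M.erase p) f hf p q hqW
  by_cases ha : Acyc (M.erase p) f
  · rw [det_Pm_acyc _ f ha]
    by_cases hr : (gr (edgesOf (M.erase p) f)).Reachable p q
    · rw [det_Pm_cyc _ _ (fun hh => (h5.1 hh).2 hr), if_pos ⟨ha, hr⟩]; ring
    · rw [det_Pm_acyc _ _ (h5.2 ⟨ha, hr⟩), if_neg (fun hh => hr hh.2)]; ring
  · rw [det_Pm_cyc _ f ha, det_Pm_cyc _ _ (fun hh => ha (h5.1 hh).1), if_neg (fun hh => ha hh.1)]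
    ring

lemma compat_iff {m : ℕ} (v : Fin m → V) (p : Fin m → Option ℕ) (hp : ∀ i, p i ≠ none)
    (F : Finset (Sym2 V)) (hF : F ∈ (⊤ : SimpleGraph V).edgeFinset.powerset) :
    IsCompatibleForest ⊤ v p F ↔ (gr F).IsAcyclic ∧
      (∀ i j, (gr F).Reachable (v i) (v j) ↔ p i = p j) ∧
      ∀ w, ∃ i, (gr F).Reachable w (v i) := by
  unfold IsCompatibleForest
  have : (F : Set (Sym2 V)) ⊆ (⊤ : SimpleGraph V).edgeSet := fun e he =>
    SimpleGraph.mem_edgeFinset.1 (Finset.mem_powerset.1 hF he)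
  simp only [this, true_and, hp, ne_eq, not_false_eq_true, forall_true_left]

open Classical in
lemma forestPoly_eq {m : ℕ} (v : Fin m → V) (p : Fin m → Option ℕ) (hp : ∀ i, p i ≠ none)
    (x : Sym2 V → R) (Q : Finset (Sym2 V) → Prop)
    (h : ∀ F, ((gr F).IsAcyclic ∧
      (∀ i j, (gr F).Reachable (v i) (v j) ↔ p i = p j) ∧
      ∀ w, ∃ i, (gr F).Reachable w (v i)) ↔ Q F) :
    forestPoly ⊤ x v p = ∑ F ∈ (⊤ : SimpleGraph V).edgeFinset.powerset,
      if Q F then ∏ e ∈ F, x e else 0 := by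
  unfold forestPoly
  refine Finset.sum_congr ?_ fun F hF => ?_
  · congr!
  · have hF' : F ∈ (⊤ : SimpleGraph V).edgeFinset.powerset := by convert hF
    have := (compat_iff v p hp F hF').trans (h F)
    by_cases hc : Q F
    · rw [if_pos (this.2 hc), if_pos hc]
    · rw [if_neg (fun hh => hc (this.1 hh)), if_neg hc]

lemma compat_T {m : ℕ} (v : Fin m → V) (r : Fin m) (F : Finset (Sym2 V)) :
    ((gr F).IsAcyclic ∧
      (∀ i j, (gr F).Reachable (v i) (v j) ↔ (some 0 : Option ℕ) = some 0) ∧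
      ∀ w, ∃ i, (gr F).Reachable w (v i)) ↔ Rooted {v r} F := by
  unfold Rooted
  simp only [iff_true, Finset.mem_singleton, exists_eq_left, forall_eq, implies_true, true_and]
  refine and_congr_right fun _ => ⟨fun ⟨h1, h2⟩ w => ?_, fun h => ⟨fun i j => ?_, fun w => ⟨r, h w⟩⟩⟩
  · obtain ⟨i, hi⟩ := h2 w
    exact hi.trans (h1 i r)
  · exact (h _).trans (h _).symm

lemma compat_D {m : ℕ} (v : Fin m → V) (hv : Function.Injective v) (F : Finset (Sym2 V)) :
    ((gr F).IsAcyclic ∧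
      (∀ i j : Fin m, (gr F).Reachable (v i) (v j) ↔ some (i : ℕ) = some (j : ℕ)) ∧
      ∀ w, ∃ i, (gr F).Reachable w (v i)) ↔ Rooted (univ.image v) F := by
  unfold Rooted
  refine and_congr_right fun _ => and_congr ⟨fun h => ?_, fun h => ?_⟩ ?_
  · intro a ha b hb hab
    obtain ⟨i, _, rfl⟩ := Finset.mem_image.1 ha
    obtain ⟨j, _, rfl⟩ := Finset.mem_image.1 hb
    have := (h i j).1 hab
    rw [Option.some_inj] at this
    rw [Fin.ext this]
  · intro i j
    refine ⟨fun hij => ?_, fun hij => ?_⟩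
    · rw [hv (h _ (by simp) _ (by simp) hij)]
    · rw [Fin.ext (Option.some_inj.1 hij)]
  · simp

lemma compat_A {m : ℕ} (v : Fin m → V) (hv : Function.Injective v) (p q : Fin m) (hpq : p ≠ q)
    (F : Finset (Sym2 V)) :
    ((gr F).IsAcyclic ∧
      (∀ i j : Fin m, (gr F).Reachable (v i) (v j) ↔
        (if (i : ℕ) = (q : ℕ) then some (p : ℕ) else some (i : ℕ)) =
        (if (j : ℕ) = (q : ℕ) then some (p : ℕ) else some (j : ℕ))) ∧
      ∀ w, ∃ i, (gr F).Reachable w (v i)) ↔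
      Rooted ((univ.image v).erase (v p)) F ∧ (gr F).Reachable (v p) (v q) := by
  have hpq' : (p : ℕ) ≠ q := fun h => hpq (Fin.ext h)
  unfold Rooted
  constructor
  · rintro ⟨h1, h2, h3⟩
    have hr : (gr F).Reachable (v p) (v q) := by
      rw [h2]; simp [hpq']
    refine ⟨⟨h1, ?_, ?_⟩, hr⟩
    · intro a ha b hb hab
      obtain ⟨hap, ha⟩ := Finset.mem_erase.1 ha
      obtain ⟨hbp, hb⟩ := Finset.mem_erase.1 hb
      obtain ⟨i, _, rfl⟩ := Finset.mem_image.1 ha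
      obtain ⟨j, _, rfl⟩ := Finset.mem_image.1 hb
      have hi : (i : ℕ) ≠ p := fun h => hap (by rw [Fin.ext h])
      have hj : (j : ℕ) ≠ p := fun h => hbp (by rw [Fin.ext h])
      have := (h2 i j).1 hab
      congr 1
      apply Fin.ext
      split_ifs at this <;> simp only [Option.some_inj] at this <;> omega
    · intro w
      obtain ⟨i, hi⟩ := h3 w
      by_cases hip : i = p
      · subst hip
        exact ⟨v q, Finset.mem_erase.2 ⟨fun h => hpq (hv h).symm, by simp⟩, hi.trans hr⟩
      · exact ⟨v i, Finset.mem_erase.2 ⟨fun h => hip (hv h), by simp⟩, hi⟩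
  · rintro ⟨⟨h1, h2, h3⟩, hr⟩
    refine ⟨h1, ?_, ?_⟩
    · intro i j
      have key : ∀ i : Fin m, ∃ i' : Fin m, i' ≠ p ∧ (gr F).Reachable (v i) (v i') ∧
          ((i = p ∧ i' = q) ∨ (i ≠ p ∧ i' = i)) := by
        intro i
        by_cases hip : i = p
        · exact ⟨q, hpq.symm, by rw [hip]; exact hr, Or.inl ⟨hip, rfl⟩⟩
        · exact ⟨i, hip, SimpleGraph.Reachable.refl _, Or.inr ⟨hip, rfl⟩⟩
      obtain ⟨i', hi1, hi2, hi3⟩ := key i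
      obtain ⟨j', hj1, hj2, hj3⟩ := key j
      have e1 : (gr F).Reachable (v i) (v j) ↔ i' = j' := by
        constructor
        · intro h
          apply hv
          refine h2 _ (Finset.mem_erase.2 ⟨fun h => hi1 (hv h), by simp⟩) _
            (Finset.mem_erase.2 ⟨fun h => hj1 (hv h), by simp⟩) ?_
          exact hi2.symm.trans (h.trans hj2)
        · rintro rfl
          exact hi2.trans hj2.symm
      rw [e1]
      simp only [Fin.ext_iff, ne_eq] at hi3 hj3 hi1 hj1 ⊢
      split_ifs <;> simp only [Option.some_inj, iff_true] <;> omega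
    · intro w
      obtain ⟨a, ha, hwa⟩ := h3 w
      obtain ⟨i, _, rfl⟩ := Finset.mem_image.1 (Finset.mem_of_mem_erase ha)
      exact ⟨i, hwa⟩

/-- compatibility with a 2-part partition -/
def CompB {m : ℕ} (v : Fin m → V) (S : Finset ℕ) (F : Finset (Sym2 V)) : Prop :=
  (gr F).IsAcyclic ∧
      (∀ i j : Fin m, (gr F).Reachable (v i) (v j) ↔
        (if (i : ℕ) ∈ S then some 0 else some 1 : Option ℕ) =
        (if (j : ℕ) ∈ S then some 0 else some 1)) ∧
      ∀ w, ∃ i, (gr F).Reachable w (v i)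

lemma label_iff (P Q : Prop) [Decidable P] [Decidable Q] :
    ((if P then some 0 else some 1 : Option ℕ) = if Q then some 0 else some 1) ↔ (P ↔ Q) := by
  by_cases P <;> by_cases Q <;> simp [*]

open Classical in
lemma sum_B {m : ℕ} (v : Fin m → V) (hv : Function.Injective v) (p q : Fin m) (hpq : p ≠ q)
    (x : Sym2 V → R) :
    ∑ S ∈ (Finset.range m).powerset.filter
            (fun S => 0 ∈ S ∧ S ≠ Finset.range m ∧
              (((p : ℕ) ∈ S ∧ (q : ℕ) ∉ S) ∨ ((p : ℕ) ∉ S ∧ (q : ℕ) ∈ S))),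
      forestPoly ⊤ x v (fun i => if (i : ℕ) ∈ S then some 0 else some 1)
    = ∑ F ∈ (⊤ : SimpleGraph V).edgeFinset.powerset,
      if Rooted {v p, v q} F then ∏ e ∈ F, x e else 0 := by
  have h0m : 0 < m := lt_of_le_of_lt (Nat.zero_le _) p.2
  have e1 : ∀ S : Finset ℕ, forestPoly (R := R) ⊤ x v (fun i => if (i : ℕ) ∈ S then some 0 else some 1)
      = ∑ F ∈ (⊤ : SimpleGraph V).edgeFinset.powerset,
      if CompB v S F then ∏ e ∈ F, x e else 0 := by
    intro S
    refine forestPoly_eq v _ ?_ x _ (fun F => Iff.rfl)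
    intro i
    split_ifs <;> simp
  simp only [e1]
  rw [Finset.sum_comm]
  refine Finset.sum_congr rfl fun F _ => ?_
  by_cases hR : Rooted {v p, v q} F
  · rw [if_pos hR]
    obtain ⟨hac, h2, h3⟩ := hR
    have hnpq : ¬ (gr F).Reachable (v p) (v q) := fun h =>
      hpq (hv (h2 _ (by simp) _ (by simp) h))
    have hw : ∀ w, (gr F).Reachable w (v p) ∨ (gr F).Reachable w (v q) := by
      intro w
      obtain ⟨a, ha, hwa⟩ := h3 w
      simp only [Finset.mem_insert, Finset.mem_singleton] at ha
      rcases ha with rfl | rfl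
      · exact Or.inl hwa
      · exact Or.inr hwa
    have htwo : ∀ a b c, ¬ (gr F).Reachable a c → ¬ (gr F).Reachable b c →
        (gr F).Reachable a b := by
      intro a b c hac hbc
      rcases hw a with ha | ha <;> rcases hw b with hb | hb <;> rcases hw c with hc | hc
      · exact ha.trans hb.symm
      · exact ha.trans hb.symm
      · exact absurd (ha.trans hc.symm) hac
      · exact absurd (hb.trans hc.symm) hbc
      · exact absurd (hb.trans hc.symm) hbc
      · exact absurd (ha.trans hc.symm) hac
      · exact ha.trans hb.symm
      · exact ha.trans hb.symm
    set z : Fin m := ⟨0, h0m⟩ with hz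
    set S0 : Finset ℕ := (Finset.range m).filter
      (fun k => ∃ h : k < m, (gr F).Reachable (v ⟨k, h⟩) (v z)) with hS0
    have memS0 : ∀ i : Fin m, (i : ℕ) ∈ S0 ↔ (gr F).Reachable (v i) (v z) := by
      intro i
      simp [hS0]
    rw [Finset.sum_eq_single S0]
    · rw [if_pos]
      refine ⟨hac, fun i j => ?_, fun w => ?_⟩
      · rw [label_iff, memS0, memS0]
        constructor
        · intro h
          exact ⟨fun h' => h.symm.trans h', fun h' => h.trans h'⟩
        · intro h
          by_cases hi : (gr F).Reachable (v i) (v z)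
          · exact hi.trans (h.1 hi).symm
          · exact htwo _ _ _ hi (fun hj => hi (h.2 hj))
      · rcases hw w with h | h
        · exact ⟨p, h⟩
        · exact ⟨q, h⟩
    · intro S hS hne
      rw [if_neg]
      rintro ⟨_, hC, _⟩
      apply hne
      rw [Finset.mem_filter, Finset.mem_powerset] at hS
      ext k
      by_cases hk : k < m
      · have h1 := memS0 ⟨k, hk⟩
        have h2 := hC ⟨k, hk⟩ z
        rw [label_iff] at h2
        have h3 : (z : ℕ) ∈ S := hS.2.1
        change k ∈ S0 ↔ _ at h1
        change _ ↔ (k ∈ S ↔ _) at h2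
        tauto
      · have h1 : k ∉ S := fun h => hk (Finset.mem_range.1 (hS.1 h))
        have h2 : k ∉ S0 := fun h => hk (Finset.mem_range.1 (Finset.mem_filter.1 h).1)
        tauto
    · intro hnot
      exfalso
      apply hnot
      rw [Finset.mem_filter, Finset.mem_powerset]
      have hsep : ((p : ℕ) ∈ S0 ∧ (q : ℕ) ∉ S0) ∨ ((p : ℕ) ∉ S0 ∧ (q : ℕ) ∈ S0) := by
        rw [memS0, memS0]
        rcases hw (v z) with h | h
        · exact Or.inl ⟨h.symm, fun h' => hnpq (h.symm.trans h'.symm)⟩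
        · exact Or.inr ⟨fun h' => hnpq (h'.trans h), h.symm⟩
      refine ⟨Finset.filter_subset _ _, ?_, ?_, hsep⟩
      · exact (memS0 z).2 (SimpleGraph.Reachable.refl _)
      · intro h
        rw [h] at hsep
        simp at hsep
  · rw [if_neg hR]
    refine Finset.sum_eq_zero fun S hS => ?_
    rw [if_neg]
    rintro ⟨hac, hC, hw⟩
    apply hR
    rw [Finset.mem_filter] at hS
    have hsep := hS.2.2.2
    simp only [label_iff] at hC
    have hnpq : ¬ (gr F).Reachable (v p) (v q) := by
      rw [hC]; tauto
    refine ⟨hac, ?_, ?_⟩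
    · intro i hi j hj hij
      simp only [Finset.mem_insert, Finset.mem_singleton] at hi hj
      rcases hi with rfl | rfl <;> rcases hj with rfl | rfl
      · rfl
      · exact absurd hij hnpq
      · exact absurd hij.symm hnpq
      · rfl
    · intro w
      obtain ⟨i, hi⟩ := hw w
      have : (gr F).Reachable (v i) (v p) ∨ (gr F).Reachable (v i) (v q) := by
        rw [hC, hC]; tauto
      rcases this with h | h
      · exact ⟨v p, by simp, hi.trans h⟩
      · exact ⟨v q, by simp, hi.trans h⟩

lemma sum_pairs (f : ℕ → ℕ → R) (h : ∀ p, f p p = 0) (m : ℕ) :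
    ∑ p ∈ Finset.range m, ∑ q ∈ Finset.range p, (f p q + f q p) =
      ∑ p ∈ Finset.range m, ∑ q ∈ Finset.range m, f p q := by
  induction m with
  | zero => simp
  | succ m ih =>
    rw [Finset.sum_range_succ, ih, Finset.sum_range_succ _ m]
    simp only [Finset.sum_range_succ _ m, Finset.sum_add_distrib, h]
    ring

end Glue
section Minors
variable {R : Type*} [CommRing R]

lemma minorDet_eq (M : Matrix ℕ ℕ R) (n : ℕ) (I J : Finset ℕ) (k : ℕ) (f g : Fin k → ℕ)
    (hf : StrictMono f) (hg : StrictMono g) (hfr : ∀ i, f i ∈ Finset.range n \ I)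
    (hgr : ∀ i, g i ∈ Finset.range n \ J) (hI : (Finset.range n \ I).card = k)
    (hJ : (Finset.range n \ J).card = k) :
    minorDet M n I J = Matrix.det (Matrix.of fun i j => M (f i) (g j)) := by
  subst hI
  unfold minorDet
  rw [dif_pos hJ]
  congr 1
  have h1 := Finset.orderEmbOfFin_unique rfl hfr hf
  have h2 := Finset.orderEmbOfFin_unique hJ hgr hg
  ext i j
  simp only [Matrix.of_apply, Finset.coe_orderIsoOfFin_apply]
  rw [← congrFun h1 i, ← congrFun h2 j]

lemma minor_two (M : Matrix ℕ ℕ R) (n : ℕ) (r c : Fin (n + 2)) (i j : Fin (n + 1))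
    (L : Matrix (Fin (n + 2)) (Fin (n + 2)) R) (hL : ∀ u w, L u w = M u w) :
    ((L.updateRow r (Pi.single c 1)).updateRow
      (r.succAbove i) (Pi.single (c.succAbove j) 1)).det =
    (-1) ^ ((r : ℕ) + c) * ((-1) ^ ((i : ℕ) + j) *
      minorDet M (n + 2) {(r : ℕ), (r.succAbove i : ℕ)} {(c : ℕ), (c.succAbove j : ℕ)}) := by
  have card_aux : ∀ (r : Fin (n + 2)) (i : Fin (n + 1)),
      (Finset.range (n + 2) \ {(r : ℕ), (r.succAbove i : ℕ)}).card = n := by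
    intro r i
    rw [Finset.card_sdiff_of_subset, Finset.card_pair, Finset.card_range]
    · rfl
    · intro h
      exact Fin.succAbove_ne r i (Fin.ext h.symm)
    · intro x hx
      simp only [Finset.mem_insert, Finset.mem_singleton] at hx
      rw [Finset.mem_range]
      rcases hx with rfl | rfl
      · exact r.2
      · exact (r.succAbove i).2
  have mem_aux : ∀ (r : Fin (n + 2)) (i : Fin (n + 1)) (a : Fin n),
      (r.succAbove (i.succAbove a) : ℕ) ∈
        Finset.range (n + 2) \ {(r : ℕ), (r.succAbove i : ℕ)} := by
    intro r i a
    simp only [Finset.mem_sdiff, Finset.mem_range, Finset.mem_insert, Finset.mem_singleton, not_or]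
    refine ⟨(r.succAbove (i.succAbove a)).2, ?_, ?_⟩
    · intro h
      exact Fin.succAbove_ne r _ (Fin.ext h)
    · intro h
      exact Fin.succAbove_ne i a (Fin.succAbove_right_injective (Fin.ext h))
  have mono_aux : ∀ (r : Fin (n + 2)) (i : Fin (n + 1)),
      StrictMono (fun a : Fin n => (r.succAbove (i.succAbove a) : ℕ)) := by
    intro r i a b hab
    exact Fin.strictMono_succAbove r (Fin.strictMono_succAbove i hab)
  rw [minorDet_eq M (n + 2) _ _ n _ _ (mono_aux r i) (mono_aux c j) (mem_aux r i) (mem_aux c j)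
    (card_aux r i) (card_aux c j)]
  rw [Matrix.det_succ_row _ r, Finset.sum_eq_single c]
  · rw [Matrix.updateRow_ne (Fin.succAbove_ne r i).symm]
    simp only [Matrix.updateRow_self, Pi.single_eq_same, mul_one]
    congr 1
    rw [Matrix.det_succ_row _ i, Finset.sum_eq_single j]
    · simp only [Matrix.submatrix_apply, Matrix.updateRow_self, Pi.single_eq_same, mul_one]
      congr 2
      ext a b
      have h1 : r.succAbove (i.succAbove a) ≠ r.succAbove i := fun h =>
        Fin.succAbove_ne i a (Fin.succAbove_right_injective h)
      have h2 : r.succAbove (i.succAbove a) ≠ r := Fin.succAbove_ne r _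
      simp [Matrix.updateRow_apply, h1, h2, hL]
    · intro b _ hb
      have : c.succAbove b ≠ c.succAbove j := fun h => hb (Fin.succAbove_right_injective h)
      simp [Matrix.updateRow_self, this]
    · simp
  · intro b _ hb
    rw [Matrix.updateRow_ne (Fin.succAbove_ne r i).symm]
    simp [Matrix.updateRow_self, hb]
  · simp

lemma minor_K (A : Matrix ℕ ℕ R) (m l : ℕ) (s t : Fin (m + l)) (hs : (s : ℕ) < m)
    (ht : (t : ℕ) < m) (M : Finset (Fin (m + l))) (hM : ∀ v, v ∈ M ↔ (v : ℕ) < m)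
    (L : Matrix (Fin (m + l)) (Fin (m + l)) R) (hL : ∀ u w, L u w = A u w) :
    minorDet A (m + l) (Finset.range m \ {(s : ℕ)}) (Finset.range m \ {(t : ℕ)}) =
      Kp L M s t := by
  have card_aux : ∀ s : Fin (m + l), (s : ℕ) < m →
      (Finset.range (m + l) \ (Finset.range m \ {(s : ℕ)})).card = l + 1 := by
    intro s hs
    rw [Finset.card_sdiff_of_subset, Finset.card_sdiff_of_subset]
    · simp only [Finset.card_range, Finset.card_singleton]; omega
    · simpa using hs
    · intro x hx
      simp only [Finset.mem_sdiff, Finset.mem_range] at hx ⊢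
      omega
  let f : Fin (m + l) → Fin (l + 1) → Fin (m + l) := fun s =>
    Fin.cons s (fun a => ⟨m + a, by omega⟩)
  have f0 : ∀ s, f s 0 = s := fun s => rfl
  have fs : ∀ s a, (f s (Fin.succ a) : ℕ) = m + a := fun s a => rfl
  have mem_aux : ∀ s : Fin (m + l), (s : ℕ) < m → ∀ a, (f s a : ℕ) ∈
      (Finset.range (m + l) \ (Finset.range m \ {(s : ℕ)})) := by
    intro s hs a
    simp only [Finset.mem_sdiff, Finset.mem_range, Finset.mem_singleton]
    refine ⟨(f s a).2, ?_⟩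
    induction a using Fin.cases with
    | zero => rw [f0]; tauto
    | succ a => rw [fs]; omega
  have mono_aux : ∀ s : Fin (m + l), (s : ℕ) < m → StrictMono (fun a => (f s a : ℕ)) := by
    intro s hs a b hab
    induction a using Fin.cases with
    | zero =>
      induction b using Fin.cases with
      | zero => exact absurd hab (lt_irrefl _)
      | succ b => change (f s 0 : ℕ) < f s b.succ; rw [f0, fs]; omega
    | succ a =>
      induction b using Fin.cases with
      | zero => exact absurd hab (by simp)
      | succ b =>
        have : (a : ℕ) < b := by simpa using hab
        change (f s a.succ : ℕ) < f s b.succ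
        rw [fs, fs]; omega
  rw [minorDet_eq A (m + l) _ _ (l + 1) _ _ (mono_aux s hs) (mono_aux t ht) (mem_aux s hs)
    (mem_aux t ht) (card_aux s hs) (card_aux t ht)]
  unfold Kp
  rw [Matrix.twoBlockTriangular_det' _ (fun v : Fin (m + l) => (v : ℕ) < m ∧ v ≠ t)]
  · have h1 : Matrix.toSquareBlockProp ((Lw M L).updateRow t
        (L s)) (fun v : Fin (m + l) => (v : ℕ) < m ∧ v ≠ t) = 1 := by
      ext a b
      rw [Matrix.toSquareBlockProp_def, Matrix.of_apply, Matrix.updateRow_ne a.2.2]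
      simp only [Lw, (hM _).2 a.2.1, if_true, Matrix.one_apply, Pi.single_apply, Subtype.ext_iff]
      simp only [eq_comm]
    refine Eq.trans ?_ (congrArg (· * _) (congrArg Matrix.det h1)).symm
    simp only [Matrix.det_one, one_mul]
    have hnot : ∀ a, ¬ ((f t a : ℕ) < m ∧ f t a ≠ t) := by
      intro a
      induction a using Fin.cases with
      | zero => rw [f0]; tauto
      | succ a => rw [fs]; omega
    let e0 : Fin (l + 1) → {v : Fin (m + l) // ¬ ((v : ℕ) < m ∧ v ≠ t)} :=
      fun a => ⟨f t a, hnot a⟩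
    have hbij : Function.Bijective e0 := by
      constructor
      · intro a b hab
        have : f t a = f t b := congrArg Subtype.val hab
        exact (mono_aux t ht).injective (congrArg Fin.val this)
      · rintro ⟨v, hv⟩
        by_cases hvt : v = t
        · exact ⟨0, Subtype.ext hvt.symm⟩
        · have : m ≤ (v : ℕ) := by
            by_contra hc
            exact hv ⟨by omega, hvt⟩
          refine ⟨Fin.succ ⟨v - m, by omega⟩, Subtype.ext (Fin.ext ?_)⟩
          change (f t _ : ℕ) = v
          rw [fs]
          simp only
          omega
    rw [← Matrix.det_submatrix_equiv_self (Equiv.ofBijective e0 hbij)]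
    congr 1
    ext a b
    simp only [Matrix.submatrix_apply, Equiv.ofBijective_apply, Matrix.toSquareBlockProp_def,
      Matrix.of_apply, e0]
    induction a using Fin.cases with
    | zero => rw [f0, f0, Matrix.updateRow_self, hL]
    | succ a =>
      have h2 : f t a.succ ≠ t := by
        intro h
        have := congrArg Fin.val h
        rw [fs] at this
        omega
      have h3 : f t a.succ ∉ M := by
        rw [hM, fs]; omega
      rw [Matrix.updateRow_ne h2]
      simp only [Lw, h3, if_false, hL, fs]
  · rintro i ⟨hi, hit⟩ j hj
    rw [Matrix.updateRow_ne hit]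
    have : j ≠ i := fun h => hj (by rw [h]; exact ⟨hi, hit⟩)
    simp [Lw, (hM _).2 hi, this]

lemma succAbove_skip {n : ℕ} (c : Fin (n + 1)) (j : Fin n) :
    (c.succAbove j : ℕ) = skip c j := by
  unfold skip Fin.succAbove
  simp only [Fin.lt_def, Fin.val_castSucc]
  split_ifs <;> simp

end Minors
section Final
variable {R : Type*} [CommRing R]

lemma minor_two' (M : Matrix ℕ ℕ R) (n : ℕ) (L : Matrix (Fin n) (Fin n) R)
    (hL : ∀ u w, L u w = M u w) (r c s t : Fin n) (i j : ℕ) (hi : i + 1 < n) (hj : j + 1 < n)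
    (hs : (s : ℕ) = skip r i) (ht : (t : ℕ) = skip c j) :
    ((L.updateRow r (Pi.single c 1)).updateRow s (Pi.single t 1)).det =
    (-1) ^ ((r : ℕ) + c) * ((-1) ^ (i + j) *
      minorDet M n {(r : ℕ), skip r i} {(c : ℕ), skip c j}) := by
  obtain ⟨n', rfl⟩ : ∃ n', n = n' + 2 := ⟨n - 2, by omega⟩
  have h := minor_two M n' r c ⟨i, by omega⟩ ⟨j, by omega⟩ L hL
  have e1 : r.succAbove ⟨i, by omega⟩ = s := Fin.ext (by rw [succAbove_skip, hs])
  have e2 : c.succAbove ⟨j, by omega⟩ = t := Fin.ext (by rw [succAbove_skip, ht])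
  rw [e1, e2] at h
  rw [h, hs, ht]

lemma minor_K' (A : Matrix ℕ ℕ R) (m n : ℕ) (hmn : m ≤ n) (s t : Fin n) (hs : (s : ℕ) < m)
    (ht : (t : ℕ) < m) (M : Finset (Fin n)) (hM : ∀ v, v ∈ M ↔ (v : ℕ) < m)
    (L : Matrix (Fin n) (Fin n) R) (hL : ∀ u w, L u w = A u w) :
    minorDet A n (Finset.range m \ {(s : ℕ)}) (Finset.range m \ {(t : ℕ)}) = Kp L M s t := by
  obtain ⟨l, rfl⟩ := Nat.exists_eq_add_of_le hmn
  exact minor_K A m l s t hs ht M hM L hL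

lemma lap_row (n : ℕ) (a : ℕ → ℕ → R) (L : Matrix (Fin n) (Fin n) R)
    (hL : ∀ u w, L u w = lap a n u w) (v : Fin n) :
    L v = ∑ u : Fin n, a v u • (Pi.single v (1 : R) - Pi.single u 1) := by
  ext w
  rw [hL, Finset.sum_apply]
  unfold lap
  by_cases h : v = w
  · subst h
    rw [if_pos rfl, Finset.sdiff_singleton_eq_erase]
    have : ∀ u : Fin n, (a v u • (Pi.single v (1 : R) - Pi.single u 1) : Fin n → R) v
        = if (u : ℕ) = v then 0 else a v u := by
      intro u
      by_cases hu : u = v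
      · subst hu; simp
      · have h1 : (u : ℕ) ≠ v := fun h => hu (Fin.ext h)
        simp [h1, Ne.symm hu]
    rw [Finset.sum_congr rfl fun u _ => this u,
      ← Finset.sum_range (fun u => if u = (v : ℕ) then 0 else a v u),
      ← Finset.add_sum_erase _ _ (Finset.mem_range.2 v.2)]
    rw [if_pos rfl, zero_add]
    refine Finset.sum_congr rfl fun u hu => ?_
    rw [if_neg (Finset.ne_of_mem_erase hu)]
  · rw [if_neg (fun h' => h (Fin.ext h')), Finset.sum_eq_single w]
    · simp [Ne.symm h]
    · intro u _ hu
      simp [Ne.symm h, hu.symm]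
    · simp

end Final

/-- **Theorem 3.5 ("every block sums to all non-forbidden monomials").**  Fix a removed
column `c < m` (and removed row `m`, i.e. the last marked vertex, index `m − 1`).
Summing the `m − 1` identities `L_{m,c}(1), …, L_{m,c}(m−1)` of the block gives an
identity whose left-hand side is `(m−1) · Φ_{(1,…,1)} Φ_{(1,2,…,m)}` and whose
right-hand side contains exactly one copy of each non-forbidden monomial `A B`: `A`
pairs two marked vertices `q < p` (others singletons) and `B` is a 2-part partition
(encoded by its part `S` containing vertex `0`) separating `p` from `q`; everything
evaluated on the complete graph on `n ≥ m` vertices with symmetric edge weights and the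
first `m` vertices marked. -/
theorem block_sum {R : Type*} [CommRing R] (n m : ℕ) (hm : m ≤ n) (h3 : 3 ≤ m)
    (a : ℕ → ℕ → R) (hsym : ∀ i j, a i j = a j i) (c : ℕ) (hc : c < m) :
    let x : Sym2 (Fin n) → R := Sym2.lift ⟨fun u w => a u w, fun u w => hsym u w⟩
    let v : Fin m → Fin n := Fin.castLE hm
    let Φ : (Fin m → Option ℕ) → R := fun p => forestPoly (⊤ : SimpleGraph (Fin n)) x v p
    let allNF : R :=
      ∑ p ∈ Finset.range m, ∑ q ∈ Finset.range p,
        ∑ S ∈ (Finset.range m).powerset.filter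
            (fun S => 0 ∈ S ∧ S ≠ Finset.range m ∧
              ((p ∈ S ∧ q ∉ S) ∨ (p ∉ S ∧ q ∈ S))),
          Φ (fun i => if (i : ℕ) = q then some p else some (i : ℕ)) *
            Φ (fun i => if (i : ℕ) ∈ S then some 0 else some 1)
    (∑ j' ∈ Finset.range (m - 1), lapRHS a n m (m - 1) c j') = allNF ∧
      ((m - 1 : ℕ) : R) * (Φ (fun _ => some 0) * Φ (fun i => some (i : ℕ))) =
        ∑ j' ∈ Finset.range (m - 1), lapRHS a n m (m - 1) c j' := by
  classical
  intro x v Φ allNF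
  have hv : Function.Injective v := Fin.castLE_injective hm
  have hn : 0 < n := by omega
  set L : Matrix (Fin n) (Fin n) R := fun u w => lap a n u w with hLdef
  have hL : ∀ u w : Fin n, L u w = lap a n u w := fun u w => rfl
  have hrow : ∀ w : Fin n, L w = ∑ u, x s(w, u) • (Pi.single w (1 : R) - Pi.single u 1) :=
    lap_row n a L hL
  have h0 : ∀ w, ∑ u, L w u = 0 := by
    intro w
    rw [hrow w]
    simp only [Finset.sum_apply, Pi.smul_apply, Pi.sub_apply, smul_eq_mul]
    rw [Finset.sum_comm]
    refine Finset.sum_eq_zero fun u _ => ?_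
    rw [← Finset.mul_sum]
    simp
  have hsymL : ∀ u w, L u w = L w u := by
    intro u w
    rw [hL, hL]
    unfold lap
    by_cases h : (u : ℕ) = w
    · rw [if_pos h, if_pos h.symm, h]
    · rw [if_neg h, if_neg (Ne.symm h), hsym]
  have h1 : ∀ u, ∑ w, L w u = 0 := by
    intro u
    rw [← h0 u]
    exact Finset.sum_congr rfl fun w _ => hsymL w u
  set M : Finset (Fin n) := univ.image v with hMdef
  have hM : ∀ w, w ∈ M ↔ (w : ℕ) < m := by
    intro w
    rw [hMdef, Finset.mem_image]
    constructor
    · rintro ⟨i, _, rfl⟩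
      exact i.2
    · intro h
      exact ⟨⟨w, h⟩, mem_univ _, Fin.ext rfl⟩
  have hvM : ∀ i, v i ∈ M := fun i => Finset.mem_image_of_mem v (mem_univ i)
  have hcard : #M = m := by
    rw [hMdef, Finset.card_image_of_injective _ hv, Finset.card_univ, Fintype.card_fin]
  let r : Fin m := ⟨m - 1, by omega⟩
  let c' : Fin m := ⟨c, hc⟩
  have hT : Φ (fun _ => some 0) = (Lw {v r} L).det := by
    rw [mtt {v r} x L hrow]
    exact forestPoly_eq v _ (by simp) x _ (compat_T v r)
  have hD : Φ (fun i => some (i : ℕ)) = (Lw M L).det := by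
    rw [mtt M x L hrow]
    exact forestPoly_eq v _ (by simp) x _ (compat_D v hv)
  have hA : ∀ p q : Fin m, p ≠ q →
      Φ (fun i => if (i : ℕ) = (q : ℕ) then some (p : ℕ) else some (i : ℕ))
        = -(Kp L M (v p) (v q)) := by
    intro p q hpq
    rw [neg_Kp M x L hrow (v p) (v q) (hvM p) (hvM q) (fun h => hpq (hv h))]
    refine (forestPoly_eq v _ ?_ x _ (compat_A v hv p q hpq)).trans
      (Finset.sum_congr rfl fun F _ => by congr)
    intro i
    split_ifs <;> simp
  have hKsym : ∀ p q : Fin m, p ≠ q → Kp L M (v p) (v q) = Kp L M (v q) (v p) := by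
    intro p q hpq
    rw [← neg_inj, ← hA p q hpq]
    rw [neg_Kp M x L hrow (v q) (v p) (hvM q) (hvM p) (fun h => hpq (hv h).symm)]
    refine (forestPoly_eq v (fun i => if (i : ℕ) = (q : ℕ) then some (p : ℕ) else some (i : ℕ))
      ?_ x _ fun F => Iff.trans ?_ (compat_A v hv q p hpq.symm F)).trans
      (Finset.sum_congr rfl fun F _ => by congr)
    · intro i
      split_ifs <;> simp
    · have : ∀ i j : Fin m, ((if (i : ℕ) = (q : ℕ) then some (p : ℕ) else some (i : ℕ)) =
        (if (j : ℕ) = (q : ℕ) then some (p : ℕ) else some (j : ℕ))) ↔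
        ((if (i : ℕ) = (p : ℕ) then some (q : ℕ) else some (i : ℕ)) =
        (if (j : ℕ) = (p : ℕ) then some (q : ℕ) else some (j : ℕ))) := by
        intro i j
        have hne : (p : ℕ) ≠ (q : ℕ) := fun h => hpq (Fin.ext h)
        split_ifs <;> simp only [Option.some_inj, true_iff, iff_true] <;> omega
      simp only [this]
  have hB : ∀ p q : Fin m, p ≠ q →
      ∑ S ∈ (Finset.range m).powerset.filter
            (fun S => 0 ∈ S ∧ S ≠ Finset.range m ∧
              (((p : ℕ) ∈ S ∧ (q : ℕ) ∉ S) ∨ ((p : ℕ) ∉ S ∧ (q : ℕ) ∈ S))),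
        Φ (fun i => if (i : ℕ) ∈ S then some 0 else some 1) = (Lw {v p, v q} L).det := by
    intro p q hpq
    rw [mtt {v p, v q} x L hrow, ← sum_B v hv p q hpq x]
  have hlap : ∀ j' ∈ Finset.range (m - 1), lapRHS a n m (m - 1) c j'
      = (Lw {v r} L).det * (Lw M L).det := by
    intro j hj
    rw [Finset.mem_range] at hj
    have htm : skip c j < m := by unfold skip; split_ifs <;> omega
    have htc : skip c j ≠ c := by unfold skip; split_ifs <;> omega
    let t : Fin m := ⟨skip c j, htm⟩
    rw [← expansion L h0 M (v r) (v c') (v t) (hvM r) (hvM c') (hvM t)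
      (fun h => htc (congrArg Fin.val (hv h)))]
    unfold lapRHS
    rw [Finset.mul_sum]
    refine Finset.sum_bij (fun i hi => v ⟨i, by rw [Finset.mem_range] at hi; omega⟩) ?_ ?_ ?_ ?_
    · intro i hi
      rw [Finset.mem_range] at hi
      refine Finset.mem_erase.2 ⟨fun h => ?_, hvM _⟩
      have : i = m - 1 := congrArg Fin.val (hv h)
      omega
    · intro i hi k hk hik
      exact congrArg Fin.val (hv hik)
    · intro b hb
      obtain ⟨hbr, hb⟩ := Finset.mem_erase.1 hb
      have hbm := (hM b).1 hb
      have hne : (b : ℕ) ≠ m - 1 := fun h => hbr (Fin.ext h)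
      exact ⟨b, Finset.mem_range.2 (by omega), Fin.ext rfl⟩
    · intro i hi
      rw [Finset.mem_range] at hi
      have hsk : skip (m - 1) i = i := by unfold skip; rw [if_pos hi]
      have e1 := minor_two' (lap a n) n L hL (v r) (v c') (v ⟨i, by omega⟩) (v t) i j
        (by omega) (by omega) hsk.symm rfl
      have e2 := minor_K' (lap a n) m n hm (v ⟨i, by omega⟩) (v t) (by
        change i < m
        omega) htm M hM L hL
      rw [e1, ← e2, hsk]
      change _ = (-1) ^ (m - 1 + c) * ((-1) ^ (i + j) *
        minorDet (lap a n) n {m - 1, skip (m - 1) i} {c, skip c j}) *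
        minorDet (lap a n) n (Finset.range m \ {i}) (Finset.range m \ {skip c j})
      rw [hsk]
      ring
  have hsumlap : ∑ j' ∈ Finset.range (m - 1), lapRHS a n m (m - 1) c j'
      = ((m - 1 : ℕ) : R) * ((Lw {v r} L).det * (Lw M L).det) := by
    rw [Finset.sum_congr rfl hlap, Finset.sum_const, Finset.card_range, nsmul_eq_mul]
  let vN : ℕ → Fin n := fun k => if h : k < n then ⟨k, h⟩ else ⟨0, hn⟩
  have hvN : ∀ i : Fin m, vN i = v i := by
    intro i
    have : (i : ℕ) < n := by omega
    simp only [vN, dif_pos this]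
    rfl
  have hsumM : ∀ g : Fin n → R, ∑ w ∈ M, g w = ∑ k ∈ Finset.range m, g (vN k) := by
    intro g
    rw [Finset.sum_range, hMdef, Finset.sum_image (fun i _ j _ h => hv h)]
    exact Finset.sum_congr rfl fun i _ => by rw [hvN]
  have hall : allNF = ((m - 1 : ℕ) : R) * ((Lw {v r} L).det * (Lw M L).det) := by
    have key := allNF_alg L h0 M (v r) (hvM r)
    rw [hcard] at key
    rw [← key, hsumM]
    simp only [hsumM]
    have pairs := sum_pairs (fun p q => -(Kp L M (vN p) (vN q)) *
      (gg L (v r) (vN p) (vN p) - gg L (v r) (vN p) (vN q))) (by intro p; simp) m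
    rw [← pairs]
    refine Finset.sum_congr rfl fun p hp => Finset.sum_congr rfl fun q hq => ?_
    rw [Finset.mem_range] at hp hq
    have hpq : (⟨p, hp⟩ : Fin m) ≠ ⟨q, by omega⟩ := by
      intro h
      have : p = q := congrArg Fin.val h
      omega
    have eA := hA ⟨p, hp⟩ ⟨q, by omega⟩ hpq
    have eB := hB ⟨p, hp⟩ ⟨q, by omega⟩ hpq
    have eK := hKsym ⟨p, hp⟩ ⟨q, by omega⟩ hpq
    have eR := resist L h0 h1 (v r) (v ⟨p, hp⟩) (v ⟨q, by omega⟩) (fun h => hpq (hv h))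
    have ep : vN p = v ⟨p, hp⟩ := hvN ⟨p, hp⟩
    have eq : vN q = v ⟨q, by omega⟩ := hvN ⟨q, by omega⟩
    rw [← Finset.mul_sum]
    simp only at eA eB
    rw [eA, eB, eR, ep, eq, ← eK]
    ring
  refine ⟨?_, ?_⟩
  · rw [hsumlap, hall]
  · rw [hsumlap, hT, hD]
end
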